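/- arXiv:2404.17882 — 7 statements merged into one kernel-verified Lean document; each statement's English description precedes it below -/
import Mathlib

section
/- There exist universal constants c, δ > 0 such that for every d ≥ 2 and every nonzero vector u ∈ ℝ^d, if v is sampled from the distribution 𝒟 on {0,1}^d, then the probability that u·v < −(δ/d)·‖u⁻‖₂ is at least c · ‖u⁻‖₂² / (√d · (log d) · ‖u‖₂²). -/
/-!
The number of levels `k` is of order `log d`, so it suffices to bound the sum over `k` of the
success probabilities `P_k` at `p_k = 2⁻ᵏ` from below by a multiple of `N / ‖u‖₁`, where
`N = ‖u⁻‖₂`: indeed `‖u‖₁ ≤ √d ‖u‖₂` and `N ≤ ‖u‖₂`.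

Write `aᵢ = (u⁻)ᵢ` and call `i` *large* if `aᵢ ≥ N / (2d)`; the large entries satisfy
`∑ aᵢ ≥ N / 2`. Let `T_k` consist of the large `i` with `8 ‖u‖₁ p_k ≤ aᵢ`, except that at the last
level `K = ⌈log₂(4d)⌉` all large `i` are admitted. Success at level `k` follows as soon as some
`i ∈ T_k` is sampled while the positive entries contribute less than half of
`max(N / (2d), 8 ‖u‖₁ p_k)`, a lower bound for the entries of `T_k` (for `k = K`: while no positive
entry is sampled, which is likely as `p_K d ≤ 1/4`). By Markov and Bonferroni, in the form of the
pointwise inequality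
`𝟙[Z ≥ 1, Y < 1] ≥ Z (1 - Y) - Z (Z - 1) / 2`, one gets `P_k ≥ min(1, p_k |T_k|) / 4`
(`bernExp_event_ge_min`). Each large `i` lies in some `T_k` with `p_k ≥ aᵢ / (16 ‖u‖₁)`
(`exists_level`), so `∑ p_k |T_k| ≥ N / (32 ‖u‖₁)`, whence `∑ P_k ≥ N / (128 ‖u‖₁)`
(`sum_levels_ge`).
-/

open MeasureTheory
open scoped Classical

/-! ### Moments of the product Bernoulli distribution -/

/-- Expectation of `f` under `𝒟_p`, the product Bernoulli distribution on `{0,1}^d`, as an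
explicit finite sum. -/
noncomputable def bernExp (d : ℕ) (p : ℝ) (f : (Fin d → Bool) → ℝ) : ℝ :=
  ∑ v : Fin d → Bool, (∏ i, if v i then p else 1 - p) * f v

/-- The numerical value of a sampled bit. -/
def bit (b : Bool) : ℝ := if b then 1 else 0

lemma bit_nonneg (b : Bool) : 0 ≤ bit b := by
  cases b <;> simp [bit]

lemma bernExp_mono {d : ℕ} {p : ℝ} (hp0 : 0 ≤ p) (hp1 : p ≤ 1) {f g : (Fin d → Bool) → ℝ}
    (h : ∀ v, f v ≤ g v) : bernExp d p f ≤ bernExp d p g := by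
  refine Finset.sum_le_sum fun v _ => mul_le_mul_of_nonneg_left (h v) ?_
  refine Finset.prod_nonneg fun i _ => ?_
  split_ifs <;> linarith

lemma bernExp_sub {d : ℕ} {p : ℝ} (f g : (Fin d → Bool) → ℝ) :
    bernExp d p (fun v => f v - g v) = bernExp d p f - bernExp d p g := by
  simp [bernExp, mul_sub, Finset.sum_sub_distrib]

lemma bernExp_const_mul {d : ℕ} {p : ℝ} (c : ℝ) (f : (Fin d → Bool) → ℝ) :
    bernExp d p (fun v => c * f v) = c * bernExp d p f := by
  simp only [bernExp, Finset.mul_sum]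
  exact Finset.sum_congr rfl fun v _ => by ring

lemma bernExp_sum {d : ℕ} {p : ℝ} {ι : Type*} (s : Finset ι) (f : ι → (Fin d → Bool) → ℝ) :
    bernExp d p (fun v => ∑ j ∈ s, f j v) = ∑ j ∈ s, bernExp d p (f j) := by
  simp only [bernExp, Finset.mul_sum]
  exact Finset.sum_comm

lemma bernExp_prod_bit {d : ℕ} (p : ℝ) (s : Finset (Fin d)) :
    bernExp d p (fun v => ∏ i ∈ s, bit (v i)) = p ^ s.card := by
  have key := Finset.prod_univ_sum (fun _ : Fin d => (Finset.univ : Finset Bool))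
    (fun i b => (if b then p else 1 - p) * (if i ∈ s then bit b else 1))
  rw [Fintype.piFinset_univ] at key
  have h1 : bernExp d p (fun v => ∏ i ∈ s, bit (v i)) =
      ∑ v : Fin d → Bool, ∏ i, (if v i then p else 1 - p) * (if i ∈ s then bit (v i) else 1) := by
    refine Finset.sum_congr rfl fun v _ => ?_
    rw [Finset.prod_mul_distrib]
    congr 1
    simp
  rw [h1, ← key]
  have h2 : ∀ i : Fin d, ∑ b : Bool, (if b then p else 1 - p) * (if i ∈ s then bit b else 1) =
      if i ∈ s then p else 1 := by
    intro i
    by_cases hi : i ∈ s <;> simp [hi, bit]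
  rw [Finset.prod_congr rfl fun i _ => h2 i]
  simp

lemma bernExp_bit {d : ℕ} (p : ℝ) (i : Fin d) : bernExp d p (fun v => bit (v i)) = p := by
  simpa using bernExp_prod_bit p {i}

lemma bernExp_bit_mul {d : ℕ} (p : ℝ) {i j : Fin d} (h : i ≠ j) :
    bernExp d p (fun v => bit (v i) * bit (v j)) = p ^ 2 := by
  simpa [Finset.prod_pair h, Finset.card_pair h] using bernExp_prod_bit p {i, j}

/-! ### Lower bound at a single level -/

/-- The second-order Bonferroni inequality combined with Markov's inequality, pointwise in the
sample: with `Z = ∑_{i ∈ T} vᵢ` and `Y = ∑ yⱼ vⱼ`, the indicator of an event containing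
`{Z ≥ 1, Y < 1}` is at least `Z - Z Y - Z (Z - 1) / 2`. -/
lemma indicator_ge {d : ℕ} (T : Finset (Fin d)) (y : Fin d → ℝ) (hy : ∀ j, 0 ≤ y j)
    (v : Fin d → Bool) (I : ℝ) (hI0 : 0 ≤ I)
    (hI : (∃ i ∈ T, v i = true) → ∑ j, y j * bit (v j) < 1 → 1 ≤ I) :
    ∑ i ∈ T, bit (v i) - ∑ i ∈ T, ∑ j, y j * (bit (v i) * bit (v j))
      - (1 / 2) * ∑ i ∈ T, ∑ j ∈ T.erase i, bit (v i) * bit (v j) ≤ I := by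
  have hZ : ∑ i ∈ T, bit (v i) = ((T.filter fun i => v i = true).card : ℝ) := by
    simp [bit]
  set n := (T.filter fun i => v i = true).card with hn
  set Y := ∑ j, y j * bit (v j) with hY
  have hYnn : 0 ≤ Y := Finset.sum_nonneg fun j _ => mul_nonneg (hy j) (bit_nonneg _)
  have h1 : ∑ i ∈ T, ∑ j, y j * (bit (v i) * bit (v j)) = n * Y := by
    rw [← hZ, hY, Finset.sum_mul_sum]
    exact Finset.sum_congr rfl fun i _ => Finset.sum_congr rfl fun j _ => by ring
  have h2 : ∑ i ∈ T, ∑ j ∈ T.erase i, bit (v i) * bit (v j) = (n : ℝ) * n - n := by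
    have : ∀ i ∈ T, ∑ j ∈ T.erase i, bit (v i) * bit (v j) = bit (v i) * n - bit (v i) := by
      intro i hi
      rw [← Finset.mul_sum, Finset.sum_erase_eq_sub hi, hZ]
      cases v i <;> simp [bit]
    rw [Finset.sum_congr rfl this, Finset.sum_sub_distrib, ← Finset.sum_mul, hZ]
  rw [h1, h2, hZ]
  rcases Nat.eq_zero_or_pos n with h0 | hpos
  · simp [h0, hI0]
  have hn1 : (1 : ℝ) ≤ n := by exact_mod_cast hpos
  rcases lt_or_ge Y 1 with hY1 | hY1
  · have hex : ∃ i ∈ T, v i = true := by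
      obtain ⟨i, hi⟩ := Finset.card_pos.mp hpos
      exact ⟨i, (Finset.mem_filter.mp hi).1, (Finset.mem_filter.mp hi).2⟩
    have hge := hI hex hY1
    -- integrality of `n` excludes the range `1 < n < 2`
    have hint : 0 ≤ ((n : ℝ) - 1) * (n - 2) := by
      rcases Nat.lt_or_ge n 2 with h | h
      · have : n = 1 := by omega
        simp [this]
      · have : (2 : ℝ) ≤ n := by exact_mod_cast h
        exact mul_nonneg (by linarith) (by linarith)
    nlinarith [mul_nonneg (by linarith : (0 : ℝ) ≤ n) hYnn]
  · nlinarith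

/-- The expectation of `indicator_ge`. The hypothesis on `yⱼ` for `j ∈ T` removes the diagonal terms,
so that only products of distinct, hence independent, bits occur. -/
lemma bernExp_event_ge {d : ℕ} {p : ℝ} (hp0 : 0 ≤ p) (hp1 : p ≤ 1) (T : Finset (Fin d))
    (y : Fin d → ℝ) (hy : ∀ j, 0 ≤ y j) (hyT : ∀ j ∈ T, y j = 0) (hyp : p * ∑ j, y j ≤ 1 / 4)
    (hT : p * ((T.card : ℝ) - 1) ≤ 1) (I : (Fin d → Bool) → ℝ) (hI0 : ∀ v, 0 ≤ I v)
    (hI : ∀ v, (∃ i ∈ T, v i = true) → ∑ j, y j * bit (v j) < 1 → 1 ≤ I v) :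
    p * T.card / 4 ≤ bernExp d p I := by
  refine le_trans ?_ (bernExp_mono hp0 hp1 fun v => indicator_ge T y hy v (I v) (hI0 v) (hI v))
  have e1 : bernExp d p (fun v => ∑ i ∈ T, bit (v i)) = T.card * p := by
    rw [bernExp_sum]; simp [bernExp_bit]
  have e2 : bernExp d p (fun v => ∑ i ∈ T, ∑ j, y j * (bit (v i) * bit (v j))) =
      T.card * (p ^ 2 * ∑ j, y j) := by
    rw [bernExp_sum]
    have : ∀ i ∈ T, bernExp d p (fun v => ∑ j, y j * (bit (v i) * bit (v j))) =
        p ^ 2 * ∑ j, y j := by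
      intro i hi
      rw [bernExp_sum, Finset.mul_sum]
      refine Finset.sum_congr rfl fun j _ => ?_
      rw [bernExp_const_mul]
      by_cases hij : i = j
      · simp [hyT j (hij ▸ hi)]
      · rw [bernExp_bit_mul p hij, mul_comm]
    rw [Finset.sum_congr rfl this]; simp
  have e3 : bernExp d p (fun v => ∑ i ∈ T, ∑ j ∈ T.erase i, bit (v i) * bit (v j)) =
      T.card * (((T.card : ℝ) - 1) * p ^ 2) := by
    rw [bernExp_sum]
    have : ∀ i ∈ T, bernExp d p (fun v => ∑ j ∈ T.erase i, bit (v i) * bit (v j)) =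
        ((T.card : ℝ) - 1) * p ^ 2 := by
      intro i hi
      rw [bernExp_sum, Finset.sum_congr rfl fun j hj =>
        bernExp_bit_mul p (Finset.ne_of_mem_erase hj).symm]
      have : 1 ≤ T.card := Finset.card_pos.mpr ⟨i, hi⟩
      simp [Finset.card_erase_of_mem hi, Nat.cast_sub this]
    rw [Finset.sum_congr rfl this]; simp
  rw [bernExp_sub, bernExp_sub, bernExp_const_mul, e1, e2, e3]
  have hm : 0 ≤ p * (T.card : ℝ) := by positivity
  nlinarith [mul_le_mul_of_nonneg_left hyp hm, mul_le_mul_of_nonneg_left hT hm]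

/-- Lower bound for the probability that some element of `T` is sampled while a Markov-type
constraint of expected size at most `1/4` holds. When `p |T|` is large, `bernExp_event_ge` is
applied to a subset of `T` with `2ᵏ + 1` elements. -/
lemma bernExp_event_ge_min {d k : ℕ} (T : Finset (Fin d))
    (y : Fin d → ℝ) (hy : ∀ j, 0 ≤ y j) (hyT : ∀ j ∈ T, y j = 0)
    (hyp : ((1 : ℝ) / 2) ^ k * ∑ j, y j ≤ 1 / 4)
    (I : (Fin d → Bool) → ℝ) (hI0 : ∀ v, 0 ≤ I v)
    (hI : ∀ v, (∃ i ∈ T, v i = true) → ∑ j, y j * bit (v j) < 1 → 1 ≤ I v) :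
    min 1 (((1 : ℝ) / 2) ^ k * T.card) / 4 ≤ bernExp d (((1 : ℝ) / 2) ^ k) I := by
  have hp0 : (0 : ℝ) < (1 / 2) ^ k := by positivity
  have hp1 : ((1 : ℝ) / 2) ^ k ≤ 1 := pow_le_one₀ (by norm_num) (by norm_num)
  have hpk : ((1 : ℝ) / 2) ^ k * 2 ^ k = 1 := by rw [← mul_pow]; norm_num
  rcases Nat.lt_or_ge T.card (2 ^ k + 1) with h | h
  · have hc : (T.card : ℝ) ≤ 2 ^ k := by exact_mod_cast Nat.lt_succ_iff.mp h
    have := bernExp_event_ge hp0.le hp1 T y hy hyT hyp (by nlinarith) I hI0 hI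
    refine le_trans ?_ this
    gcongr
    exact min_le_right _ _
  · obtain ⟨T', hT', hc⟩ := Finset.exists_subset_card_eq h
    have hc' : (T'.card : ℝ) = 2 ^ k + 1 := by rw [hc]; push_cast; ring
    have := bernExp_event_ge hp0.le hp1 T' y hy (fun j hj => hyT j (hT' hj)) hyp
      (by rw [hc']; nlinarith) I hI0
      (fun v ⟨i, hi, hv⟩ hs => hI v ⟨i, hT' hi, hv⟩ hs)
    refine le_trans ?_ this
    have h1 := min_le_left 1 (((1 : ℝ) / 2) ^ k * T.card)
    rw [hc']
    nlinarith

/-! ### Summation over the levels -/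

/-- Every `x ∈ (0, 1]` has some `2⁻ᵏ`, `k ≤ K`, in `[x / 2, x]`, unless `x` is too small for the
range of `k`; then `k = K` serves, with `2⁻ᴷ` possibly exceeding `x`. -/
lemma exists_level (K : ℕ) {x : ℝ} (hx0 : 0 < x) (hx1 : x ≤ 1) :
    ∃ k ≤ K, (k = K ∨ ((1 : ℝ) / 2) ^ k ≤ x) ∧ x / 2 ≤ ((1 : ℝ) / 2) ^ k := by
  obtain ⟨n, h1, h2⟩ := exists_nat_pow_near_of_lt_one hx0 hx1
    (by norm_num : (0 : ℝ) < 1 / 2) (by norm_num)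
  rcases Nat.lt_or_ge n K with h | h
  · refine ⟨n + 1, h, Or.inr h1.le, ?_⟩
    rw [pow_succ]; linarith
  · refine ⟨K, le_rfl, Or.inl rfl, ?_⟩
    have : ((1 : ℝ) / 2) ^ n ≤ (1 / 2) ^ K :=
      pow_le_pow_of_le_one (by norm_num) (by norm_num) h
    linarith

lemma min_one_sum_le {ι : Type*} (s : Finset ι) (f : ι → ℝ) (hf : ∀ i ∈ s, 0 ≤ f i) :
    min 1 (∑ i ∈ s, f i) ≤ ∑ i ∈ s, min 1 (f i) := by
  by_cases h : ∃ i ∈ s, 1 ≤ f i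
  · obtain ⟨i, hi, h1⟩ := h
    calc min 1 (∑ i ∈ s, f i) ≤ 1 := min_le_left _ _
      _ = min 1 (f i) := (min_eq_left h1).symm
      _ ≤ _ := Finset.single_le_sum (f := fun i => min 1 (f i))
        (fun j hj => le_min zero_le_one (hf j hj)) hi
  · push Not at h
    rw [Finset.sum_congr rfl fun i hi => min_eq_right (h i hi).le]
    exact min_le_right _ _

/-- If some negative entry of absolute value at least `τ` is sampled, then `u · v` is at most the
contribution of the positive entries minus `τ`. -/
lemma dot_le {d : ℕ} (u : Fin d → ℝ) (v : Fin d → Bool) {τ : ℝ} {i : Fin d}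
    (hi : v i = true) (hτ : τ ≤ max 0 (-u i)) :
    ∑ j, u j * bit (v j) ≤ ∑ j, max 0 (u j) * bit (v j) - τ := by
  have h : ∑ j, u j * bit (v j) =
      ∑ j, max 0 (u j) * bit (v j) - ∑ j, max 0 (-u j) * bit (v j) := by
    rw [← Finset.sum_sub_distrib]
    refine Finset.sum_congr rfl fun j _ => ?_
    have : u j = max 0 (u j) - max 0 (-u j) := by
      rcases le_total 0 (u j) with h | h
      · rw [max_eq_right h, max_eq_left (by linarith)]; ring
      · rw [max_eq_left h, max_eq_right (by linarith)]; ring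
    rw [← sub_mul, ← this]
  have h2 : max 0 (-u i) * bit (v i) ≤ ∑ j, max 0 (-u j) * bit (v j) :=
    Finset.single_le_sum (f := fun j => max 0 (-u j) * bit (v j))
      (fun j _ => mul_nonneg (le_max_left _ _) (bit_nonneg _)) (Finset.mem_univ i)
  have h3 : bit (v i) = 1 := by simp [bit, hi]
  rw [h3, mul_one] at h2
  linarith

/-- Lower bound for the total success probability over all levels `2⁻⁰, …, 2⁻ᴷ`, where
`2⁻ᴷ ≤ 1/(4d)`; `I` majorizes the indicator of success, and `N` stands for `‖u⁻‖₂`, of which only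
`0 < N ≤ ‖u⁻‖₁` matters. -/
lemma sum_levels_ge {d : ℕ} (hd : 2 ≤ d) (u : Fin d → ℝ) (K : ℕ)
    (hK : ((1 : ℝ) / 2) ^ K * d ≤ 1 / 4) (N : ℝ) (hN0 : 0 < N)
    (hN : N ≤ ∑ i, max 0 (-u i)) (I : (Fin d → Bool) → ℝ) (hI0 : ∀ v, 0 ≤ I v)
    (hI : ∀ v, ∑ j, u j * bit (v j) < -((1 / 8) / d) * N → 1 ≤ I v) :
    N / (128 * ∑ i, |u i|) ≤ ∑ k ∈ Finset.range (K + 1), bernExp d (((1 : ℝ) / 2) ^ k) I := by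
  have hd0 : (0 : ℝ) < d := by exact_mod_cast (by omega : 0 < d)
  set a : Fin d → ℝ := fun i => max 0 (-u i) with ha
  have ha0 : ∀ i, 0 ≤ a i := fun i => le_max_left _ _
  have haabs : ∀ i, a i ≤ |u i| := fun i => max_le (abs_nonneg _) (neg_le_abs _)
  set S := ∑ i, |u i| with hS
  have haS : ∀ i, a i ≤ S := fun i => (haabs i).trans
    (Finset.single_le_sum (f := fun i => |u i|) (fun _ _ => abs_nonneg _) (Finset.mem_univ i))
  have hNS : N ≤ S := hN.trans (Finset.sum_le_sum fun i _ => haabs i)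
  have hS0 : 0 < S := hN0.trans_le hNS
  set t := N / (2 * d) with ht
  have ht0 : 0 < t := by positivity
  set G := Finset.univ.filter fun i => t ≤ a i with hG
  set T : ℕ → Finset (Fin d) := fun k =>
    G.filter fun i => k = K ∨ 8 * S * (1 / 2) ^ k ≤ a i with hT
  have hneg : ∀ i, t ≤ a i → u i < 0 := by
    intro i hi
    by_contra hcon
    have : a i = 0 := max_eq_left (by linarith)
    linarith
  have hG_sum : N / 2 ≤ ∑ i ∈ G, a i := by
    have h1 := Finset.sum_filter_add_sum_filter_not Finset.univ (fun i => t ≤ a i) a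
    have h2 : ∑ i ∈ Finset.univ.filter (fun i => ¬ t ≤ a i), a i ≤ ∑ _i : Fin d, t := by
      refine le_trans (Finset.sum_le_sum fun i hi => ?_)
        (Finset.sum_le_sum_of_subset_of_nonneg (Finset.filter_subset _ _) fun _ _ _ => ht0.le)
      exact (not_le.mp (Finset.mem_filter.mp hi).2).le
    have h3 : ∑ _i : Fin d, t = N / 2 := by
      simp [ht]; field_simp
    linarith
  have hlevel : ∀ k ∈ Finset.range (K + 1),
      min 1 (((1 : ℝ) / 2) ^ k * (T k).card) / 4 ≤ bernExp d (((1 : ℝ) / 2) ^ k) I := by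
    intro k _
    have hthr : -((1 / 8) / (d : ℝ)) * N = -(t / 4) := by
      rw [ht]; field_simp; norm_num
    by_cases hkK : k = K
    · -- at the last level, with probability at least `3/4` no positive entry is sampled
      refine bernExp_event_ge_min (T k) (fun j => if 0 < u j then 1 else 0) ?_ ?_ ?_ I hI0 ?_
      · intro j; split_ifs <;> norm_num
      · intro j hj
        have := hneg j (Finset.mem_filter.mp (Finset.mem_filter.mp hj).1).2
        exact if_neg this.not_gt
      · refine le_trans ?_ hK
        rw [hkK]
        gcongr
        calc ∑ j : Fin d, (if 0 < u j then (1 : ℝ) else 0) ≤ ∑ _j : Fin d, (1 : ℝ) :=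
              Finset.sum_le_sum fun j _ => by split_ifs <;> norm_num
          _ = d := by simp
      · rintro v ⟨i, hi, hv⟩ hs
        refine hI v ?_
        rw [hthr]
        have h1 := dot_le u v hv (Finset.mem_filter.mp (Finset.mem_filter.mp hi).1).2
        have h2 : ∑ j, max 0 (u j) * bit (v j) = 0 := by
          refine Finset.sum_eq_zero fun j _ => ?_
          by_cases hj : 0 < u j
          · have h3 := Finset.single_le_sum
              (f := fun j => (if 0 < u j then (1 : ℝ) else 0) * bit (v j))
              (fun j _ => mul_nonneg (by split_ifs <;> norm_num) (bit_nonneg _))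
              (Finset.mem_univ j)
            simp only [if_pos hj, one_mul] at h3
            cases hvj : v j
            · simp [bit]
            · have hb : bit (v j) = 1 := by simp [bit, hvj]
              rw [hb] at h3
              exact absurd hs h3.not_gt
          · rw [max_eq_left (not_lt.mp hj), zero_mul]
        linarith
    · -- otherwise the positive contribution stays below `τ / 2` by Markov's inequality
      set τ := max t (8 * S * (1 / 2) ^ k) with hτ
      have hτ0 : 0 < τ := ht0.trans_le (le_max_left _ _)
      have hTτ : ∀ i ∈ T k, τ ≤ a i := by
        intro i hi
        have h1 := Finset.mem_filter.mp hi
        exact max_le (Finset.mem_filter.mp h1.1).2 (h1.2.resolve_left hkK)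
      refine bernExp_event_ge_min (T k) (fun j => 2 / τ * max 0 (u j)) ?_ ?_ ?_ I hI0 ?_
      · intro j; positivity
      · intro j hj
        have := hneg j (Finset.mem_filter.mp (Finset.mem_filter.mp hj).1).2
        simp [this.le]
      · rw [← Finset.mul_sum]
        have h1 : ∑ j, max 0 (u j) ≤ S :=
          Finset.sum_le_sum fun j _ => max_le (abs_nonneg _) (le_abs_self _)
        have h2 : 8 * S * (1 / 2) ^ k ≤ τ := le_max_right _ _
        calc ((1 : ℝ) / 2) ^ k * (2 / τ * ∑ j, max 0 (u j))
            ≤ (1 / 2) ^ k * (2 / τ * S) := by gcongr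
          _ = (8 * S * (1 / 2) ^ k) / (4 * τ) := by field_simp; norm_num
          _ ≤ τ / (4 * τ) := by gcongr
          _ = 1 / 4 := by field_simp
      · rintro v ⟨i, hi, hv⟩ hs
        refine hI v ?_
        rw [hthr]
        have h1 := dot_le u v hv (hTτ i hi)
        have h2 : ∑ j, 2 / τ * max 0 (u j) * bit (v j) =
            2 / τ * ∑ j, max 0 (u j) * bit (v j) := by
          rw [Finset.mul_sum]
          exact Finset.sum_congr rfl fun j _ => by ring
        rw [h2, div_mul_eq_mul_div, div_lt_one hτ0] at hs
        have h3 : t ≤ τ := le_max_left _ _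
        linarith
  have hcount : N / (32 * S) ≤ ∑ k ∈ Finset.range (K + 1), ((1 : ℝ) / 2) ^ k * (T k).card := by
    have h1 : ∑ k ∈ Finset.range (K + 1), ((1 : ℝ) / 2) ^ k * (T k).card =
        ∑ i ∈ G, ∑ k ∈ Finset.range (K + 1),
          if k = K ∨ 8 * S * (1 / 2) ^ k ≤ a i then ((1 : ℝ) / 2) ^ k else 0 := by
      rw [Finset.sum_comm]
      refine Finset.sum_congr rfl fun k _ => ?_
      rw [← Finset.sum_filter, Finset.sum_const, nsmul_eq_mul, mul_comm]
    rw [h1]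
    calc N / (32 * S) = (N / 2) / (16 * S) := by field_simp; norm_num
      _ ≤ (∑ i ∈ G, a i) / (16 * S) := by gcongr
      _ = ∑ i ∈ G, a i / (16 * S) := Finset.sum_div _ _ _
      _ ≤ _ := by
        refine Finset.sum_le_sum fun i hi => ?_
        have hai : 0 < a i := ht0.trans_le (Finset.mem_filter.mp hi).2
        obtain ⟨k, hkK, hk, hk2⟩ := exists_level K (x := a i / (8 * S)) (by positivity)
          (by rw [div_le_one (by positivity)]; linarith [haS i])
        have hcond : k = K ∨ 8 * S * (1 / 2) ^ k ≤ a i := by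
          refine hk.imp id fun h => ?_
          rw [le_div_iff₀ (by positivity)] at h
          linarith
        calc a i / (16 * S) = a i / (8 * S) / 2 := by field_simp; norm_num
          _ ≤ (1 / 2) ^ k := hk2
          _ = if k = K ∨ 8 * S * (1 / 2) ^ k ≤ a i then ((1 : ℝ) / 2) ^ k else 0 :=
            (if_pos hcond).symm
          _ ≤ _ := Finset.single_le_sum
            (f := fun k => if k = K ∨ 8 * S * (1 / 2) ^ k ≤ a i then ((1 : ℝ) / 2) ^ k else 0)
            (fun k _ => by split_ifs <;> positivity)
            (Finset.mem_range.mpr (Nat.lt_succ_of_le hkK))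
  have hsmall : N / (32 * S) ≤ 1 := by
    rw [div_le_one (by positivity)]; linarith
  calc N / (128 * S) = N / (32 * S) / 4 := by field_simp; norm_num
    _ ≤ min 1 (∑ k ∈ Finset.range (K + 1), ((1 : ℝ) / 2) ^ k * (T k).card) / 4 := by
        gcongr; exact le_min hsmall hcount
    _ ≤ (∑ k ∈ Finset.range (K + 1), min 1 (((1 : ℝ) / 2) ^ k * (T k).card)) / 4 := by
        gcongr; exact min_one_sum_le _ _ fun k _ => by positivity
    _ = ∑ k ∈ Finset.range (K + 1), min 1 (((1 : ℝ) / 2) ^ k * (T k).card) / 4 :=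
        Finset.sum_div _ _ _
    _ ≤ _ := Finset.sum_le_sum hlevel

/-! ### The number of levels and the conclusion -/

lemma half_pow_ceil_mul_le {d : ℕ} (hd : 2 ≤ d) :
    ((1 : ℝ) / 2) ^ ⌈Real.logb 2 (4 * d)⌉₊ * d ≤ 1 / 4 := by
  have hd0 : (0 : ℝ) < d := by exact_mod_cast (by omega : 0 < d)
  have h1 := Nat.le_ceil (Real.logb 2 (4 * d))
  rw [Real.logb_le_iff_le_rpow (by norm_num) (by positivity), Real.rpow_natCast] at h1
  rw [div_pow, one_pow, div_mul_eq_mul_div, div_le_div_iff₀ (by positivity) (by norm_num)]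
  linarith

lemma ceil_add_one_le {d : ℕ} (hd : 2 ≤ d) :
    (⌈Real.logb 2 (4 * d)⌉₊ + 1 : ℝ) ≤ 8 * Real.log d := by
  have hd2 : (2 : ℝ) ≤ d := by exact_mod_cast hd
  have h1 := (Nat.ceil_lt_add_one (Real.logb_nonneg (b := 2) (x := 4 * d) (by norm_num)
    (by linarith))).le
  have h2 : Real.logb 2 (4 * d) = 2 + Real.logb 2 d := by
    rw [Real.logb_mul (by norm_num) (by linarith)]
    congr 1
    rw [Real.logb_eq_iff_rpow_eq (by norm_num) (by norm_num) (by norm_num)]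
    norm_num
  have h3 : Real.logb 2 d * Real.log 2 = Real.log d := by
    rw [Real.logb, div_mul_cancel₀]; exact (Real.log_pos (by norm_num)).ne'
  have h4 : 1 ≤ Real.logb 2 d := by
    rw [Real.le_logb_iff_rpow_le (by norm_num) (by linarith)]; simpa using hd2
  have h5 := Real.log_two_gt_d9
  nlinarith

/-- Detecting negative entries with subset sums: there are universal constants `c, δ > 0` such
that for every `d ≥ 2` and nonzero `u ∈ ℝ^d`, if `v ∼ 𝒟` (pick `p` uniformly from
`{2⁻ᵏ : 0 ≤ k ≤ ⌈log₂(4d)⌉}`, then each coordinate of `v ∈ {0,1}^d` is `1` independently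
with probability `p`), then `ℙ[u·v < -(δ/d)·‖u⁻‖₂] ≥ c·‖u⁻‖₂²/(√d·(log d)·‖u‖₂²)`. -/
theorem detecting_negative_entries :
    ∃ c δ : ℝ, 0 < c ∧ 0 < δ ∧
      ∀ (d : ℕ), 2 ≤ d → ∀ u : Fin d → ℝ, u ≠ 0 →
        c * (Real.sqrt (∑ i, (max 0 (-u i)) ^ 2)) ^ 2 /
            (Real.sqrt d * Real.log d * (Real.sqrt (∑ i, (u i) ^ 2)) ^ 2) ≤
          ((⌈Real.logb 2 (4 * d)⌉₊ + 1 : ℝ))⁻¹ *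
            ∑ k ∈ Finset.range (⌈Real.logb 2 (4 * d)⌉₊ + 1),
              ∑ v : Fin d → Bool,
                (∏ i, if v i then ((1 : ℝ) / 2) ^ k else 1 - ((1 : ℝ) / 2) ^ k) *
                  (if (∑ i, u i * (if v i then (1 : ℝ) else 0)) <
                      -(δ / d) * Real.sqrt (∑ i, (max 0 (-u i)) ^ 2)
                  then (1 : ℝ) else 0) := by
  refine ⟨1 / 1024, 1 / 8, by norm_num, by norm_num, fun d hd u hu => ?_⟩
  have hd2 : (2 : ℝ) ≤ d := by exact_mod_cast hd
  have hlog : 0 < Real.log d := Real.log_pos (by linarith)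
  have hsd : 0 < Real.sqrt d := Real.sqrt_pos.mpr (by linarith)
  set N := Real.sqrt (∑ i, (max 0 (-u i)) ^ 2) with hN
  set U := Real.sqrt (∑ i, (u i) ^ 2) with hU
  set K := ⌈Real.logb 2 (4 * d)⌉₊ with hK
  have hN0 : 0 ≤ N := Real.sqrt_nonneg _
  have hNU : N ≤ U := by
    refine Real.sqrt_le_sqrt (Finset.sum_le_sum fun i _ => ?_)
    rw [← sq_abs (u i)]
    gcongr
    exact max_le (abs_nonneg _) (neg_le_abs _)
  have hNa : N ≤ ∑ i, max 0 (-u i) :=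
    Real.sqrt_le_iff.mpr ⟨Finset.sum_nonneg fun i _ => le_max_left _ _,
      Finset.sum_sq_le_sq_sum_of_nonneg fun i _ => le_max_left _ _⟩
  have hSU : ∑ i, |u i| ≤ Real.sqrt d * U := by
    rw [hU, ← Real.sqrt_mul (by positivity)]
    refine Real.le_sqrt_of_sq_le ?_
    simpa using sq_sum_le_card_mul_sum_sq (s := Finset.univ) (f := fun i => |u i|)
  set R := ∑ k ∈ Finset.range (K + 1), bernExp d (((1 : ℝ) / 2) ^ k)
    (fun v => if (∑ i, u i * (if v i then (1 : ℝ) else 0)) < -((1 / 8) / d) * N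
      then (1 : ℝ) else 0) with hR
  change _ ≤ ((K : ℝ) + 1)⁻¹ * R
  have hR0 : 0 ≤ R := by
    refine Finset.sum_nonneg fun k _ => ?_
    refine le_trans (le_of_eq ?_) (bernExp_mono (f := fun _ => 0) (by positivity)
      (pow_le_one₀ (by norm_num) (by norm_num)) fun v => ?_)
    · simp [bernExp]
    · split_ifs <;> norm_num
  have hK1 : (0 : ℝ) < (K : ℝ) + 1 := by positivity
  rcases hN0.eq_or_lt with h0 | hNpos
  · rw [← h0]
    simpa using mul_nonneg (inv_nonneg.mpr hK1.le) hR0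
  have hmain : N / (128 * ∑ i, |u i|) ≤ R := by
    refine sum_levels_ge hd u K (half_pow_ceil_mul_le hd) N hNpos hNa _
      (fun v => by split_ifs <;> norm_num) (fun v hv => ?_)
    exact (if_pos hv).ge
  have hUpos : 0 < U := hNpos.trans_le hNU
  have hSpos : 0 < ∑ i, |u i| := hNpos.trans_le
    (hNa.trans (Finset.sum_le_sum fun i _ => max_le (abs_nonneg _) (neg_le_abs _)))
  calc 1 / 1024 * N ^ 2 / (Real.sqrt d * Real.log d * U ^ 2)
      = (8 * Real.log d)⁻¹ * (N / (128 * (Real.sqrt d * U)) * (N / U)) := by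
        field_simp; norm_num
    _ ≤ (8 * Real.log d)⁻¹ * (N / (128 * (Real.sqrt d * U)) * 1) := by
        gcongr; exact (div_le_one hUpos).mpr hNU
    _ ≤ ((K : ℝ) + 1)⁻¹ * (N / (128 * ∑ i, |u i|)) := by
        rw [mul_one]
        gcongr
        exact ceil_add_one_le hd
    _ ≤ ((K : ℝ) + 1)⁻¹ * R := by gcongr
end

section
/- Let d ≥ 1, let 0 < ε ≤ 1 ≤ M, and for i ∈ {1,…,d} define f_i : [0,1]^d → ℝ by f_i(x) := −ε·x_i + Σ_{j ≠ i} (M/√d)·x_j. Then each f_i is √2·M-Lipschitz with respect to the Euclidean metric, and for every i and every Lebesgue-integrable monotone function g : [0,1]^d → ℝ, ∫_{[0,1]^d} |f_i − g| dx ≥ ε/4. -/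
open MeasureTheory

/-!
The Lipschitz bound is Cauchy–Schwarz: the coefficient vector of `f_i` has squared norm
`ε² + (d - 1) M² / d ≤ 2 M²`.

For the distance to monotone functions, cut the cube by the hyperplane `x_i = 1/2` into a lower
half `L` and an upper half `U`, so that `U = L + e_i / 2`. Moving from `x ∈ L` to `x + e_i / 2`
lowers `f_i` by `ε / 2` and does not lower `g`, so
`|f_i - g|(x) + |f_i - g|(x + e_i / 2) ≥ ε / 2`. Integrating over `L`, which has volume `1 / 2`,
gives `ε / 4`; this integral is that of `|f_i - g|` over `L ∪ U` because translations preserve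
Lebesgue measure and `L ∩ U` is a null set.
-/

/-- The Lipschitz estimate in terms of the increment `z = x - y`. -/
lemma abs_linear_le (d : ℕ) (ε M : ℝ) (hε : 0 < ε) (hε1 : ε ≤ 1) (hM : 1 ≤ M)
    (i : Fin d) (z : Fin d → ℝ) :
    |-ε * z i + ∑ j ∈ Finset.univ.erase i, (M / Real.sqrt d) * z j| ≤
      Real.sqrt 2 * M * Real.sqrt (∑ j, z j ^ 2) := by
  have hd0 : (0 : ℝ) < d := by exact_mod_cast i.pos
  set c : Fin d → ℝ := Function.update (fun _ => M / Real.sqrt d) i (-ε) with hc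
  have hci : c i = -ε := by simp [hc]
  have hcj : ∀ j ∈ Finset.univ.erase i, c j = M / Real.sqrt d := fun j hj => by
    simp [hc, Function.update_of_ne (Finset.ne_of_mem_erase hj)]
  have hsum : -ε * z i + ∑ j ∈ Finset.univ.erase i, (M / Real.sqrt d) * z j =
      ∑ j, c j * z j := by
    rw [← Finset.add_sum_erase _ _ (Finset.mem_univ i), hci]
    congr 1
    exact Finset.sum_congr rfl fun j hj => by rw [hcj j hj]
  have hc2 : ∑ j, c j ^ 2 ≤ 2 * M ^ 2 := by
    rw [← Finset.add_sum_erase _ _ (Finset.mem_univ i), hci]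
    have h1 : ∑ j ∈ Finset.univ.erase i, c j ^ 2 ≤ ∑ _j : Fin d, M ^ 2 / d := by
      calc ∑ j ∈ Finset.univ.erase i, c j ^ 2
          = ∑ j ∈ Finset.univ.erase i, M ^ 2 / d :=
            Finset.sum_congr rfl fun j hj => by
              rw [hcj j hj, div_pow, Real.sq_sqrt hd0.le]
        _ ≤ _ := Finset.sum_le_sum_of_subset_of_nonneg (Finset.erase_subset _ _)
            fun _ _ _ => by positivity
    have h2 : ∑ _j : Fin d, M ^ 2 / (d : ℝ) = M ^ 2 := by
      simp only [Finset.sum_const, Finset.card_univ, Fintype.card_fin, nsmul_eq_mul]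
      field_simp
    nlinarith
  rw [hsum]
  have hz : 0 ≤ ∑ j, z j ^ 2 := Finset.sum_nonneg fun _ _ => sq_nonneg _
  have hM0 : 0 ≤ M := by linarith
  apply abs_le_of_sq_le_sq _ (by positivity)
  calc (∑ j, c j * z j) ^ 2 ≤ (∑ j, c j ^ 2) * ∑ j, z j ^ 2 :=
        Finset.sum_mul_sq_le_sq_mul_sq _ _ _
    _ ≤ (2 * M ^ 2) * ∑ j, z j ^ 2 := mul_le_mul_of_nonneg_right hc2 hz
    _ = _ := by
        rw [mul_pow, mul_pow, Real.sq_sqrt hz, Real.sq_sqrt (by norm_num)]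

/-- If the values of `h` at `x` and `x + e_i / 2` differ by at least `ε / 2` for every `x` in the
lower half of the cube, then the `L¹` norm of `h` on the cube is at least `ε / 4`. -/
lemma integral_abs_ge_of_shift (d : ℕ) (ε : ℝ) (i : Fin d) (h : (Fin d → ℝ) → ℝ)
    (hint : IntegrableOn h (Set.Icc (0 : Fin d → ℝ) 1))
    (hshift : ∀ x ∈ Set.Icc (0 : Fin d → ℝ) (Function.update 1 i (1 / 2)),
      ε / 2 ≤ h x - h (x + Pi.single i (1 / 2))) :
    ε / 4 ≤ ∫ x in Set.Icc (0 : Fin d → ℝ) 1, |h x| := by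
  set e : Fin d → ℝ := Pi.single i (1 / 2) with he
  set L := Set.Icc (0 : Fin d → ℝ) (Function.update 1 i (1 / 2)) with hL
  set U := Set.Icc (Function.update (0 : Fin d → ℝ) i (1 / 2)) 1 with hU
  have hLs : L ⊆ Set.Icc (0 : Fin d → ℝ) 1 := by
    refine Set.Icc_subset_Icc le_rfl ?_
    rw [update_le_iff]
    exact ⟨by norm_num, fun _ _ => le_rfl⟩
  have hUs : U ⊆ Set.Icc (0 : Fin d → ℝ) 1 := by
    refine Set.Icc_subset_Icc ?_ le_rfl
    rw [le_update_iff]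
    exact ⟨by norm_num, fun _ _ => le_rfl⟩
  have hpre : (fun x => x + e) ⁻¹' U = L := by
    ext x
    simp only [Set.mem_preimage, hU, hL, Set.mem_Icc, Pi.le_def, ← forall_and]
    refine forall_congr' fun j => ?_
    by_cases hj : j = i
    · subst hj
      simp only [he, Pi.add_apply, Pi.single_eq_same, Function.update_self, Pi.one_apply,
        Pi.zero_apply]
      constructor <;> rintro ⟨h1, h2⟩ <;> constructor <;> linarith
    · simp [he, hj]
  have hvolL : volume.real L = 1 / 2 := by
    rw [measureReal_def, hL, Real.volume_Icc_pi_toReal]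
    · rw [← Finset.mul_prod_erase _ _ (Finset.mem_univ i), Finset.prod_eq_one]
      · simp
      · intro j hj
        simp [Function.update_of_ne (Finset.ne_of_mem_erase hj)]
    · rw [le_update_iff]
      exact ⟨by norm_num, fun _ _ => by simp⟩
  have hdisj : AEDisjoint volume L U := by
    refine measure_mono_null (t := Set.Icc (Function.update (0 : Fin d → ℝ) i (1 / 2))
      (Function.update 1 i (1 / 2))) (fun x hx => ⟨hx.2.1, hx.1.2⟩) ?_
    rw [Real.volume_Icc_pi]
    exact Finset.prod_eq_zero (Finset.mem_univ i) (by simp)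
  have habs : IntegrableOn (fun x => |h x|) (Set.Icc (0 : Fin d → ℝ) 1) := hint.abs
  have hmp : MeasurePreserving (fun x : Fin d → ℝ => x + e) volume volume :=
    measurePreserving_add_right volume e
  have hemb : MeasurableEmbedding (fun x : Fin d → ℝ => x + e) :=
    measurableEmbedding_addRight e
  have hUint : ∫ x in L, |h (x + e)| = ∫ x in U, |h x| := by
    rw [← hpre]
    exact hmp.setIntegral_preimage_emb hemb (fun x => |h x|) U
  have hshint : IntegrableOn (fun x => |h (x + e)|) L := by
    rw [← hpre]
    exact (hmp.integrableOn_comp_preimage hemb (f := fun x => |h x|)).2 (habs.mono_set hUs)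
  have hfin : volume L ≠ ⊤ := isCompact_Icc.measure_lt_top.ne
  calc ε / 4 = ∫ _x in L, ε / 2 := by
        rw [setIntegral_const, hvolL, smul_eq_mul]; ring
    _ ≤ ∫ x in L, (|h x| + |h (x + e)|) := by
        refine setIntegral_mono_on (integrableOn_const hfin)
          ((habs.mono_set hLs).add hshint) measurableSet_Icc fun x hx => ?_
        linarith [hshift x hx, le_abs_self (h x), neg_abs_le (h (x + e))]
    _ = (∫ x in L, |h x|) + ∫ x in U, |h x| := by
        rw [integral_add (habs.mono_set hLs) hshint, hUint]
    _ = ∫ x in L ∪ U, |h x| :=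
        (setIntegral_union₀ hdisj measurableSet_Icc.nullMeasurableSet
          (habs.mono_set hLs) (habs.mono_set hUs)).symm
    _ ≤ ∫ x in Set.Icc (0 : Fin d → ℝ) 1, |h x| :=
        setIntegral_mono_set habs (Filter.Eventually.of_forall fun x => abs_nonneg _)
          (Set.union_subset hLs hUs).eventuallyLE

/-- The lower-bound construction: for `d ≥ 1`, `0 < ε ≤ 1 ≤ M` and
`f_i(x) := -ε·x_i + ∑_{j ≠ i} (M/√d)·x_j`, each `f_i` is `√2·M`-Lipschitz (Euclidean) and
every Lebesgue-integrable function `g` monotone on `[0,1]^d` satisfies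
`∫_{[0,1]^d} |f_i - g| ≥ ε/4`. -/
theorem lower_bound_family (d : ℕ) (hd : 1 ≤ d) (ε M : ℝ)
    (hε : 0 < ε) (hε1 : ε ≤ 1) (hM : 1 ≤ M) :
    ∀ i : Fin d,
      (∀ x y : Fin d → ℝ,
        |(-ε * x i + ∑ j ∈ Finset.univ.erase i, (M / Real.sqrt d) * x j) -
            (-ε * y i + ∑ j ∈ Finset.univ.erase i, (M / Real.sqrt d) * y j)| ≤
          Real.sqrt 2 * M * Real.sqrt (∑ j, (x j - y j) ^ 2)) ∧
      ∀ g : (Fin d → ℝ) → ℝ,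
        (∀ x ∈ Set.Icc (0 : Fin d → ℝ) 1, ∀ y ∈ Set.Icc (0 : Fin d → ℝ) 1,
          x ≤ y → g x ≤ g y) →
        IntegrableOn g (Set.Icc (0 : Fin d → ℝ) 1) →
        ε / 4 ≤ ∫ x in Set.Icc (0 : Fin d → ℝ) 1,
          |(-ε * x i + ∑ j ∈ Finset.univ.erase i, (M / Real.sqrt d) * x j) - g x| := by
  intro i
  refine ⟨fun x y => ?_, fun g hg hgi => ?_⟩
  · have h := abs_linear_le d ε M hε hε1 hM i (x - y)
    simp only [Pi.sub_apply, mul_sub, Finset.sum_sub_distrib] at h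
    convert h using 2
    ring
  · have hf : Continuous fun x : Fin d → ℝ =>
        -ε * x i + ∑ j ∈ Finset.univ.erase i, (M / Real.sqrt d) * x j := by fun_prop
    refine integral_abs_ge_of_shift d ε i _
      ((hf.continuousOn.integrableOn_compact isCompact_Icc).sub hgi) fun x hx => ?_
    have hxle : x ≤ x + Pi.single i (1 / 2) :=
      le_add_of_nonneg_right (Pi.single_nonneg.2 (by norm_num))
    have hx1 : x + Pi.single i (1 / 2) ≤ 1 := by
      intro j
      have hj := hx.2 j
      by_cases hji : j = i
      · subst hji
        simp only [Function.update_self] at hj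
        simp only [Pi.add_apply, Pi.single_eq_same, Pi.one_apply]
        linarith
      · simpa [hji] using hj
    have hmono := hg x ⟨hx.1, hxle.trans hx1⟩ _ ⟨hx.1.trans hxle, hx1⟩ hxle
    have hsum : ∑ j ∈ Finset.univ.erase i,
          (M / Real.sqrt d) * (x + Pi.single i (1 / 2) : Fin d → ℝ) j =
        ∑ j ∈ Finset.univ.erase i, (M / Real.sqrt d) * x j :=
      Finset.sum_congr rfl fun j hj => by
        simp [Pi.single_eq_of_ne (Finset.ne_of_mem_erase hj)]
    rw [hsum]
    simp only [Pi.add_apply, Pi.single_eq_same]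
    linarith
end

section
/- Let Ω ⊂ ℝ^d be a bounded open set and let h be the restriction to the closure of Ω of a continuously differentiable function on ℝ^d. Then: (i) for every x ∈ Ω, limsup_{t→0⁺} ((H⃗_t h)(x) − h(x))/t ≤ |∇⁺h(x)|²/2; and (ii) there is a constant B ≥ 0 (depending only on h and Ω) such that 0 ≤ ((H⃗_t h)(x) − h(x))/t ≤ B for all t > 0 and all x ∈ Ω. -/
/-!
Both parts rest on completing the square: if `h y - h x ≤ C * ‖x - y‖` then
`h y - h x - ‖x - y‖ ^ 2 / (2 * t) ≤ t * (C ^ 2 / 2)`.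

A `C¹` function is `K`-Lipschitz on a ball containing the bounded set `Ω`, which gives the uniform
bound `K ^ 2 / 2` in (ii); nonnegativity comes from the competitor `y = x`.

For (i), write `G = |∇⁺h(x)|`. For `y ⪰ x` the increments `y i - x i` are nonnegative, so
`∇h(x) · (y - x) ≤ ∇⁺h(x) · (y - x) ≤ G * ‖x - y‖` by Cauchy–Schwarz, and differentiability gives
`h y - h x ≤ (G + ε) * ‖x - y‖` for `y` within some `δ` of `x`. Points at distance at least `δ`
do not beat `y = x` as soon as `2 * t * K ≤ δ`. So the quotient is eventually at most
`(G + ε) ^ 2 / 2`, and `ε → 0` concludes.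
-/

open MeasureTheory

/-- The directed Hamilton–Jacobi operator on `Ω`:
`(H⃗ₜ h)(x) = sup{h(y) - |x-y|²/(2t) : y ∈ Ω, y ⪰ x}`. -/
noncomputable def Hdir (d : ℕ) (Ω : Set (EuclideanSpace ℝ (Fin d)))
    (h : EuclideanSpace ℝ (Fin d) → ℝ) (t : ℝ) (x : EuclideanSpace ℝ (Fin d)) : ℝ :=
  sSup ((fun y => h y - ‖x - y‖ ^ 2 / (2 * t)) '' {y ∈ Ω | ∀ i, x i ≤ y i})

/-- Completing the square in the penalised increment. -/
lemma penalised_le {t C r a : ℝ} (ht : 0 < t) (ha : a ≤ C * r) :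
    a - r ^ 2 / (2 * t) ≤ t * (C ^ 2 / 2) := by
  have key : C * r - r ^ 2 / (2 * t) = t * (C ^ 2 / 2) - (r - t * C) ^ 2 / (2 * t) := by
    field_simp
    ring
  have : 0 ≤ (r - t * C) ^ 2 / (2 * t) := by positivity
  linarith

/-- A bound on all competitors bounds the difference quotient of `Hdir`. -/
lemma quotient_le {d : ℕ} {Ω : Set (EuclideanSpace ℝ (Fin d))}
    {h : EuclideanSpace ℝ (Fin d) → ℝ} {t B : ℝ} {x : EuclideanSpace ℝ (Fin d)}
    (ht : 0 < t) (hx : x ∈ Ω)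
    (hB : ∀ y ∈ Ω, (∀ i, x i ≤ y i) → h y - h x - ‖x - y‖ ^ 2 / (2 * t) ≤ t * B) :
    (Hdir d Ω h t x - h x) / t ≤ B := by
  rw [div_le_iff₀ ht]
  have : Hdir d Ω h t x ≤ h x + t * B := by
    refine csSup_le (Set.Nonempty.image _ ⟨x, hx, fun _ => le_rfl⟩) ?_
    rintro _ ⟨y, ⟨hy, hxy⟩, rfl⟩
    have := hB y hy hxy
    dsimp only
    linarith
  linarith

/-- The boundedness hypothesis ensures that the supremum in `Hdir` is a genuine one. -/
lemma quotient_nonneg {d : ℕ} {Ω : Set (EuclideanSpace ℝ (Fin d))}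
    {h : EuclideanSpace ℝ (Fin d) → ℝ} {t B : ℝ} {x : EuclideanSpace ℝ (Fin d)}
    (ht : 0 < t) (hx : x ∈ Ω)
    (hB : ∀ y ∈ Ω, (∀ i, x i ≤ y i) → h y - h x - ‖x - y‖ ^ 2 / (2 * t) ≤ t * B) :
    0 ≤ (Hdir d Ω h t x - h x) / t := by
  refine div_nonneg (sub_nonneg.2 ?_) ht.le
  refine le_csSup ⟨h x + t * B, ?_⟩ ⟨x, ⟨hx, fun _ => le_rfl⟩, by simp⟩
  rintro _ ⟨y, ⟨hy, hxy⟩, rfl⟩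
  have := hB y hy hxy
  dsimp only
  linarith

lemma exists_increment_bound {d : ℕ} {Ω : Set (EuclideanSpace ℝ (Fin d))}
    (hΩb : Bornology.IsBounded Ω) {h : EuclideanSpace ℝ (Fin d) → ℝ} (hh : ContDiff ℝ 1 h) :
    ∃ K : ℝ, 0 ≤ K ∧ ∀ x ∈ Ω, ∀ y ∈ Ω, h y - h x ≤ K * ‖x - y‖ := by
  obtain ⟨R, hR⟩ := hΩb.subset_closedBall 0
  obtain ⟨K, hK⟩ := (isCompact_closedBall (0 : EuclideanSpace ℝ (Fin d)) R).exists_bound_of_continuousOn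
    (hh.continuous_fderiv one_ne_zero).continuousOn
  refine ⟨max 0 K, le_max_left _ _, fun x hx y hy => ?_⟩
  have := (convex_closedBall (0 : EuclideanSpace ℝ (Fin d)) R).norm_image_sub_le_of_norm_fderiv_le
    (fun z _ => hh.differentiable one_ne_zero z)
    (fun z hz => (hK z hz).trans (le_max_right 0 K)) (hR hx) (hR hy)
  rw [norm_sub_rev x y]
  exact (Real.le_norm_self _).trans this

/-- On the positive cone, a linear form is dominated by its positive part, hence by the Euclidean
norm of the latter. -/
lemma linear_le_of_nonneg {d : ℕ} (L : EuclideanSpace ℝ (Fin d) →L[ℝ] ℝ)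
    (v : EuclideanSpace ℝ (Fin d)) (hv : ∀ i, 0 ≤ v i) :
    L v ≤ √(∑ i, (max 0 (L (EuclideanSpace.single i 1))) ^ 2) * ‖v‖ := by
  have hL : L v = ∑ i, v i * L (EuclideanSpace.single i 1) := by
    conv_lhs => rw [← (EuclideanSpace.basisFun (Fin d) ℝ).sum_repr v]
    simp
  rw [hL, EuclideanSpace.norm_eq]
  simp only [Real.norm_eq_abs, sq_abs]
  refine le_trans ?_ (Real.sum_mul_le_sqrt_mul_sqrt Finset.univ _ _)
  refine Finset.sum_le_sum fun i _ => ?_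
  rw [mul_comm]
  exact mul_le_mul_of_nonneg_right (le_max_right _ _) (hv i)

/-- Properties of the directed Hamilton–Jacobi operator for a `C¹` function `h` on a bounded
open set `Ω`: (i) `limsup_{t→0⁺} (H⃗ₜh(x) - h(x))/t ≤ |∇⁺h(x)|²/2` for every `x ∈ Ω`; and
(ii) the quotient `(H⃗ₜh(x) - h(x))/t` is nonnegative and uniformly bounded over `t > 0`
and `x ∈ Ω`. -/
theorem hamilton_jacobi_properties (d : ℕ) (Ω : Set (EuclideanSpace ℝ (Fin d)))
    (hΩo : IsOpen Ω) (hΩb : Bornology.IsBounded Ω)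
    (h : EuclideanSpace ℝ (Fin d) → ℝ) (hh : ContDiff ℝ 1 h) :
    (∀ x ∈ Ω,
      Filter.limsup (fun t => (Hdir d Ω h t x - h x) / t) (nhdsWithin 0 (Set.Ioi 0)) ≤
        (∑ i, (max 0 (fderiv ℝ h x (EuclideanSpace.single i 1))) ^ 2) / 2) ∧
    ∃ B : ℝ, 0 ≤ B ∧ ∀ t : ℝ, 0 < t → ∀ x ∈ Ω,
      0 ≤ (Hdir d Ω h t x - h x) / t ∧ (Hdir d Ω h t x - h x) / t ≤ B := by
  obtain ⟨K, hK0, hK⟩ := exists_increment_bound hΩb hh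
  have hB : ∀ t : ℝ, 0 < t → ∀ x ∈ Ω, ∀ y ∈ Ω, (∀ i, x i ≤ y i) →
      h y - h x - ‖x - y‖ ^ 2 / (2 * t) ≤ t * (K ^ 2 / 2) :=
    fun t ht x hx y hy _ => penalised_le ht (hK x hx y hy)
  refine ⟨fun x hx => ?_, K ^ 2 / 2, by positivity, fun t ht x hx =>
    ⟨quotient_nonneg ht hx (hB t ht x hx), quotient_le ht hx (hB t ht x hx)⟩⟩
  set S := ∑ i, (max 0 (fderiv ℝ h x (EuclideanSpace.single i 1))) ^ 2 with hS
  have hS0 : 0 ≤ S := Finset.sum_nonneg fun i _ => sq_nonneg _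
  -- The real-valued `limsup` is only meaningful because the quotient is bounded below.
  have hcob : Filter.IsCoboundedUnder (· ≤ ·) (nhdsWithin (0 : ℝ) (Set.Ioi 0))
      (fun t => (Hdir d Ω h t x - h x) / t) := by
    refine Filter.IsBoundedUnder.isCoboundedUnder_le ⟨0, ?_⟩
    rw [Filter.eventually_map]
    filter_upwards [self_mem_nhdsWithin] with t ht
    exact quotient_nonneg ht hx (hB t ht x hx)
  have main : ∀ ε : ℝ, 0 < ε →
      Filter.limsup (fun t => (Hdir d Ω h t x - h x) / t) (nhdsWithin 0 (Set.Ioi 0)) ≤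
        (√S + ε) ^ 2 / 2 := by
    intro ε hε
    have hd := (hh.differentiable one_ne_zero x).hasFDerivAt.isLittleO.def hε
    obtain ⟨δ, hδ, hball⟩ := Metric.eventually_nhds_iff.1 hd
    refine Filter.limsup_le_of_le hcob ?_
    have hsmall : ∀ᶠ t : ℝ in nhdsWithin 0 (Set.Ioi 0), 2 * t * K < δ := by
      have : Filter.Tendsto (fun t : ℝ => 2 * t * K) (nhds 0) (nhds (2 * 0 * K)) :=
        Continuous.tendsto (by fun_prop) 0
      exact nhdsWithin_le_nhds (this.eventually_lt_const (by simpa using hδ))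
    filter_upwards [self_mem_nhdsWithin, hsmall] with t ht hts
    have ht : 0 < t := ht
    refine quotient_le ht hx fun y hy hxy => ?_
    by_cases hyx : dist y x < δ
    · refine penalised_le ht ?_
      have h1 := (Real.le_norm_self _).trans (hball hyx)
      have h2 := linear_le_of_nonneg (fderiv ℝ h x) (y - x) (fun i => by simpa using hxy i)
      rw [← hS] at h2
      rw [norm_sub_rev x y]
      linarith
    · have hr : δ ≤ ‖x - y‖ := by
        rw [← dist_eq_norm, dist_comm]
        exact not_lt.1 hyx
      have h1 := hK x hx y hy
      have h2 : K * ‖x - y‖ ≤ ‖x - y‖ ^ 2 / (2 * t) := by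
        rw [le_div_iff₀ (by positivity)]
        nlinarith [norm_nonneg (x - y)]
      have h3 : 0 ≤ t * ((√S + ε) ^ 2 / 2) := by positivity
      linarith
  have hlim : Filter.Tendsto (fun ε : ℝ => (√S + ε) ^ 2 / 2) (nhdsWithin 0 (Set.Ioi 0))
      (nhds (S / 2)) := by
    have : Filter.Tendsto (fun ε : ℝ => (√S + ε) ^ 2 / 2) (nhds 0)
        (nhds ((√S + 0) ^ 2 / 2)) := Continuous.tendsto (by fun_prop) 0
    rw [add_zero, Real.sq_sqrt hS0] at this
    exact this.mono_left nhdsWithin_le_nhds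
  refine ge_of_tendsto hlim ?_
  filter_upwards [self_mem_nhdsWithin] with ε hε
  exact main ε hε
end

section
/- Let Ω ⊂ ℝ^d be an open set and let h be the restriction to the closure of Ω of a continuously differentiable function on ℝ^d. Then for every x ∈ Ω, |∇⁺h(x)| = lim_{r→0⁺} sup{ (h(y) − h(x))⁺ / |x − y| : y ∈ Ω, 0 < |x − y| < r, y ⪰ x }. -/
/-!
Write `g` for the gradient of `h` at `x` and `p` for its positive part. For `v ⪰ 0` one has
`⟪g, v⟫ ≤ ⟪p, v⟫ ≤ |p| |v|` (Cauchy–Schwarz, `fderiv_le_norm_posGrad`), while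
`⟪g, p⟫ = |p|²` (`fderiv_posGrad`). So `|p|` is the largest slope of the linear part of `h`
along directions `v ⪰ 0`, and it is attained at `v = p` when `p ≠ 0`. Differentiability at `x` says
that, on a small ball, each difference quotient is within `ε / 2` of the slope of the linear part;
hence the supremum is within `ε / 2` of `|p|`. For `p = 0` the lower bound is the nonnegativity of
the quotients, which also covers an empty set of competitors (`d = 0`), where `sSup ∅ = 0`.
-/

/-- The vector of positive parts `max 0 (L eᵢ)` of the coefficients of a linear form `L`; for
`L = fderiv ℝ h x` this is `∇⁺h(x)`. -/
noncomputable def posGrad {d : ℕ} (L : EuclideanSpace ℝ (Fin d) →L[ℝ] ℝ) :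
    EuclideanSpace ℝ (Fin d) :=
  WithLp.toLp 2 fun i => max 0 (L (EuclideanSpace.single i 1))

lemma posGrad_norm {d : ℕ} (L : EuclideanSpace ℝ (Fin d) →L[ℝ] ℝ) :
    ‖posGrad L‖ = Real.sqrt (∑ i, (max 0 (L (EuclideanSpace.single i 1))) ^ 2) := by
  simp [EuclideanSpace.norm_eq, posGrad]

lemma linear_form_eq_sum {d : ℕ} (L : EuclideanSpace ℝ (Fin d) →L[ℝ] ℝ)
    (v : EuclideanSpace ℝ (Fin d)) :
    L v = ∑ i, v i * L (EuclideanSpace.single i 1) := by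
  have hv : v = ∑ i, v i • EuclideanSpace.single i (1 : ℝ) := by
    ext j
    simp [Pi.single_apply]
  conv_lhs => rw [hv]
  simp

lemma fderiv_le_norm_posGrad {d : ℕ} (L : EuclideanSpace ℝ (Fin d) →L[ℝ] ℝ)
    (v : EuclideanSpace ℝ (Fin d)) (hv : ∀ i, 0 ≤ v i) :
    L v ≤ ‖posGrad L‖ * ‖v‖ := by
  refine le_trans ?_ (real_inner_le_norm (posGrad L) v)
  rw [linear_form_eq_sum, PiLp.inner_apply]
  refine Finset.sum_le_sum fun i _ => ?_
  simp only [posGrad, RCLike.inner_apply, conj_trivial]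
  exact mul_le_mul_of_nonneg_left (le_max_right _ _) (hv i)

lemma fderiv_posGrad {d : ℕ} (L : EuclideanSpace ℝ (Fin d) →L[ℝ] ℝ) :
    L (posGrad L) = ‖posGrad L‖ ^ 2 := by
  rw [linear_form_eq_sum, EuclideanSpace.norm_sq_eq]
  refine Finset.sum_congr rfl fun i _ => ?_
  simp only [posGrad, Real.norm_eq_abs, sq_abs]
  rcases le_total 0 (L (EuclideanSpace.single i 1)) with h | h
  · rw [max_eq_right h, sq]
  · rw [max_eq_left h]; simp

/-- For a `C¹` function `h` and `x` in an open set `Ω ⊂ ℝ^d`, the norm of the positive part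
of the gradient `|∇⁺h(x)|` equals the limit as `r → 0⁺` of
`sup{ (h(y)-h(x))⁺/|x-y| : y ∈ Ω, 0 < |x-y| < r, y ⪰ x }`. -/
theorem directed_gradient_as_limit_of_quotients (d : ℕ)
    (Ω : Set (EuclideanSpace ℝ (Fin d))) (hΩ : IsOpen Ω)
    (h : EuclideanSpace ℝ (Fin d) → ℝ) (hh : ContDiff ℝ 1 h)
    (x : EuclideanSpace ℝ (Fin d)) (hx : x ∈ Ω) :
    Filter.Tendsto (fun r : ℝ =>
        sSup ((fun y => max 0 (h y - h x) / ‖x - y‖) ''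
          {y | y ∈ Ω ∧ 0 < ‖x - y‖ ∧ ‖x - y‖ < r ∧ ∀ i, x i ≤ y i}))
      (nhdsWithin 0 (Set.Ioi 0))
      (nhds (Real.sqrt (∑ i, (max 0 (fderiv ℝ h x (EuclideanSpace.single i 1))) ^ 2))) := by
  rw [← posGrad_norm]
  have hd : HasFDerivAt h (fderiv ℝ h x) x :=
    (hh.differentiable (by simp) x).hasFDerivAt
  generalize fderiv ℝ h x = L at hd ⊢
  set p := posGrad L with hp
  rw [Metric.tendsto_nhdsWithin_nhds]
  intro ε hε
  obtain ⟨δ, hδ, hδ'⟩ := Metric.eventually_nhds_iff.1 (hd.isLittleO.def (half_pos hε))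
  obtain ⟨η, hη, hηΩ⟩ := Metric.isOpen_iff.1 hΩ x hx
  refine ⟨δ, hδ, fun r hr0 hrδ => ?_⟩
  have hr : 0 < r := hr0
  have hrδ' : r < δ := by simpa [Real.dist_eq, abs_of_pos hr] using hrδ
  have happrox : ∀ y, ‖x - y‖ < r → |h y - h x - L (y - x)| ≤ ε / 2 * ‖x - y‖ := by
    intro y hy
    have := hδ' (y := y) (by rw [dist_comm, dist_eq_norm]; linarith)
    rwa [Real.norm_eq_abs, norm_sub_rev y x] at this
  have hupper : ∀ q ∈ (fun y => max 0 (h y - h x) / ‖x - y‖) ''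
      {y | y ∈ Ω ∧ 0 < ‖x - y‖ ∧ ‖x - y‖ < r ∧ ∀ i, x i ≤ y i}, q ≤ ‖p‖ + ε / 2 := by
    rintro _ ⟨y, ⟨-, hy0, hyr, hxy⟩, rfl⟩
    have h1 := (abs_le.1 (happrox y hyr)).2
    have h2 := fderiv_le_norm_posGrad L (y - x) (fun i => by simpa using hxy i)
    rw [norm_sub_rev y x, ← hp] at h2
    rw [div_le_iff₀ hy0]
    exact max_le (by positivity) (by linarith)
  have hle := Real.sSup_le hupper (by positivity)
  have hge : ‖p‖ - ε / 2 ≤ sSup ((fun y => max 0 (h y - h x) / ‖x - y‖) ''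
      {y | y ∈ Ω ∧ 0 < ‖x - y‖ ∧ ‖x - y‖ < r ∧ ∀ i, x i ≤ y i}) := by
    rcases (norm_nonneg p).eq_or_lt with h0 | hpos
    · refine le_trans (by linarith) (Real.sSup_nonneg ?_)
      rintro _ ⟨y, -, rfl⟩
      positivity
    · -- The competitor `x + t p` lies at distance `min r η / 2` from `x`.
      set t := min r η / 2 / ‖p‖ with ht
      have hm : 0 < min r η := lt_min hr hη
      have htpos : 0 < t := by positivity
      have hnorm : ‖x - (x + t • p)‖ = t * ‖p‖ := by
        rw [sub_add_cancel_left, norm_neg, norm_smul, Real.norm_of_nonneg htpos.le]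
      have htp : t * ‖p‖ = min r η / 2 := div_mul_cancel₀ _ hpos.ne'
      have hlt_r : t * ‖p‖ < r := by linarith [min_le_left r η]
      have hlt_η : t * ‖p‖ < η := by linarith [min_le_right r η]
      refine le_trans ?_ (le_csSup ⟨_, hupper⟩ ⟨x + t • p, ⟨?_, ?_, ?_, ?_⟩, rfl⟩)
      · have h1 := (abs_le.1 (happrox (x + t • p) (by rwa [hnorm]))).1
        rw [hnorm, add_sub_cancel_left, map_smul, hp, fderiv_posGrad, ← hp, smul_eq_mul] at h1
        change _ ≤ max 0 (h (x + t • p) - h x) / ‖x - (x + t • p)‖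
        rw [hnorm, le_div_iff₀ (by positivity)]
        exact le_trans (by linarith) (le_max_right _ _)
      · refine hηΩ ?_
        rwa [Metric.mem_ball, dist_comm, dist_eq_norm, hnorm]
      · rw [hnorm]; positivity
      · rwa [hnorm]
      · intro i
        have : 0 ≤ p i := le_max_left _ _
        simp only [PiLp.add_apply, PiLp.smul_apply, smul_eq_mul]
        nlinarith
  rw [Real.dist_eq, abs_lt]
  constructor <;> linarith
end

section
/- Let I, J ⊆ {1,…,d} be nonempty disjoint sets. Let μ, ϱ, ν be Borel probability measures on ℝ^d supported in bounded sets, and let γ⁺ ∈ Π_I(μ → ϱ) and γ⁻ ∈ Π_J(ϱ → ν). Then there exists γ ∈ Π_{I∪J}(μ → ν) satisfying C₂(γ)² = C₂(γ⁺)² + C₂(γ⁻)². -/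
/-!
The two plans are glued along their common marginal: disintegrating `γm` over `ϱ` gives a Markov
kernel `κ`, and running `κ` from the endpoint of `γp` produces a law on triples `((x, y), z)` with
`(x, y)` distributed as `γp` and `(y, z)` as `γm` (`exists_gluing`). The coupling sought is the
law of `(x, z)`. Almost surely `x ⪯ y ⪯ z`, the displacement `x - y` lives on the coordinates `I`
and `y - z` on `J`. Since `I` and `J` are disjoint these displacements are orthogonal, so
`|x - z|² = |x - y|² + |y - z|²` (`norm_sub_sq_of_disjoint`), and integrating gives the claim.
-/

open MeasureTheory
open scoped ENNReal

/-- `γ` is a directed coupling of `μ` and `ν` on `ℝ^d`. -/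
def IsDirCoupling (d : ℕ) (μ ν : Measure (EuclideanSpace ℝ (Fin d)))
    (γ : Measure (EuclideanSpace ℝ (Fin d) × EuclideanSpace ℝ (Fin d))) : Prop :=
  IsProbabilityMeasure γ ∧ γ.map Prod.fst = μ ∧ γ.map Prod.snd = ν ∧
    γ {p | ∀ i, p.1 i ≤ p.2 i} = 1

/-- `γ` is `K`-aligned: it gives zero mass to pairs differing in a coordinate outside `K`
(for `K = univ` the condition is vacuous). -/
def IsAligned (d : ℕ) (K : Finset (Fin d))
    (γ : Measure (EuclideanSpace ℝ (Fin d) × EuclideanSpace ℝ (Fin d))) : Prop :=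
  γ {p | ∃ i, i ∉ K ∧ p.1 i ≠ p.2 i} = 0

/-- The squared quadratic transport cost `C₂(γ)² = ∫ |x-y|² dγ`. -/
noncomputable def cost2sq (d : ℕ)
    (γ : Measure (EuclideanSpace ℝ (Fin d) × EuclideanSpace ℝ (Fin d))) : ℝ≥0∞ :=
  ∫⁻ p, ENNReal.ofReal (‖p.1 - p.2‖ ^ 2) ∂γ

open ProbabilityTheory in
/-- Gluing lemma: couplings sharing the middle marginal come from a single law on triples, obtained
by following the first coupling with the conditional kernel of the second. -/
theorem exists_gluing {X Y Z : Type*} [MeasurableSpace X] [MeasurableSpace Y]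
    [MeasurableSpace Z] [StandardBorelSpace Z] [Nonempty Z]
    (α : Measure (X × Y)) (β : Measure (Y × Z)) [IsProbabilityMeasure α] [IsProbabilityMeasure β]
    (h : α.map Prod.snd = β.map Prod.fst) :
    ∃ π : Measure ((X × Y) × Z), IsProbabilityMeasure π ∧ π.map Prod.fst = α ∧
      π.map (fun t => (t.1.2, t.2)) = β := by
  refine ⟨α ⊗ₘ (β.condKernel.comap Prod.snd measurable_snd), inferInstance,
    Measure.fst_compProd _ _, ?_⟩
  conv_rhs => rw [← β.disintegrate β.condKernel]
  have hm : Measurable (fun t : (X × Y) × Z => (t.1.2, t.2)) := by fun_prop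
  ext s hs
  rw [Measure.map_apply hm hs, Measure.compProd_apply (hm hs), Measure.compProd_apply hs,
    Measure.fst, ← h, lintegral_map (Kernel.measurable_kernel_prodMk_left hs) measurable_snd]
  rfl

/-- Pythagoras for two successive displacements supported on disjoint sets of coordinates. -/
theorem norm_sub_sq_of_disjoint {d : ℕ} {I J : Finset (Fin d)} (hIJ : Disjoint I J)
    {x y z : EuclideanSpace ℝ (Fin d)} (hxy : ∀ i ∉ I, x i = y i) (hyz : ∀ i ∉ J, y i = z i) :
    ‖x - z‖ ^ 2 = ‖x - y‖ ^ 2 + ‖y - z‖ ^ 2 := by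
  simp only [EuclideanSpace.real_norm_sq_eq, PiLp.sub_apply, ← Finset.sum_add_distrib]
  refine Finset.sum_congr rfl fun i _ => ?_
  by_cases hi : i ∈ I
  · rw [hyz i (Finset.disjoint_left.mp hIJ hi)]; ring
  · rw [hxy i hi]; ring

theorem measurableSet_directed (d : ℕ) :
    MeasurableSet {p : EuclideanSpace ℝ (Fin d) × EuclideanSpace ℝ (Fin d) |
      ∀ i, p.1 i ≤ p.2 i} := by
  rw [Set.ofPred_forall]
  exact MeasurableSet.iInter fun i => measurableSet_le (by fun_prop) (by fun_prop)

/-- Directedness and alignment, read as almost sure coordinatewise statements. -/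
theorem ae_of_dirCoupling {d : ℕ} {K : Finset (Fin d)}
    {μ ν : Measure (EuclideanSpace ℝ (Fin d))}
    {γ : Measure (EuclideanSpace ℝ (Fin d) × EuclideanSpace ℝ (Fin d))}
    (hγ : IsDirCoupling d μ ν γ) (hK : IsAligned d K γ) :
    ∀ᵐ p ∂γ, (∀ i, p.1 i ≤ p.2 i) ∧ ∀ i ∉ K, p.1 i = p.2 i := by
  obtain ⟨hpr, -, -, hle⟩ := hγ
  have hms := measurableSet_directed d
  have h₁ : ∀ᵐ p ∂γ, ∀ i, p.1 i ≤ p.2 i := (mem_ae_iff_prob_eq_one hms).mpr hle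
  have h₂ : ∀ᵐ p ∂γ, ¬ ∃ i, i ∉ K ∧ p.1 i ≠ p.2 i := measure_eq_zero_iff_ae_notMem.mp hK
  filter_upwards [h₁, h₂] with p hp hq
  exact ⟨hp, fun i hi => by_contra fun h => hq ⟨i, hi, h⟩⟩

/-- Pythagorean composition of transport plans: given disjoint nonempty `I, J ⊆ [d]`,
boundedly supported probability measures `μ, ϱ, ν`, an `I`-aligned directed coupling
`γ⁺ ∈ Π_I(μ → ϱ)` and a `J`-aligned directed coupling `γ⁻ ∈ Π_J(ϱ → ν)`, there is
`γ ∈ Π_{I∪J}(μ → ν)` with `C₂(γ)² = C₂(γ⁺)² + C₂(γ⁻)²`. -/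
theorem pythagorean_composition (d : ℕ) (I J : Finset (Fin d))
    (hI : I.Nonempty) (hJ : J.Nonempty) (hIJ : Disjoint I J)
    (μ ϱ ν : Measure (EuclideanSpace ℝ (Fin d)))
    [IsProbabilityMeasure μ] [IsProbabilityMeasure ϱ] [IsProbabilityMeasure ν]
    (hμ : ∃ s, Bornology.IsBounded s ∧ μ sᶜ = 0)
    (hϱ : ∃ s, Bornology.IsBounded s ∧ ϱ sᶜ = 0)
    (hν : ∃ s, Bornology.IsBounded s ∧ ν sᶜ = 0)
    (γp γm : Measure (EuclideanSpace ℝ (Fin d) × EuclideanSpace ℝ (Fin d)))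
    (hγp : IsDirCoupling d μ ϱ γp) (hγpI : IsAligned d I γp)
    (hγm : IsDirCoupling d ϱ ν γm) (hγmJ : IsAligned d J γm) :
    ∃ γ : Measure (EuclideanSpace ℝ (Fin d) × EuclideanSpace ℝ (Fin d)),
      IsDirCoupling d μ ν γ ∧ IsAligned d (I ∪ J) γ ∧
      cost2sq d γ = cost2sq d γp + cost2sq d γm := by
  have hp := ae_of_dirCoupling hγp hγpI
  have hm := ae_of_dirCoupling hγm hγmJ
  obtain ⟨_, hp₁, hp₂, -⟩ := hγp
  obtain ⟨_, hm₁, hm₂, -⟩ := hγm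
  obtain ⟨π, _, rfl, rfl⟩ := exists_gluing γp γm (hp₂.trans hm₁.symm)
  have mf : Measurable (Prod.fst : (EuclideanSpace ℝ (Fin d) × EuclideanSpace ℝ (Fin d)) ×
    EuclideanSpace ℝ (Fin d) → _) := measurable_fst
  have ms : Measurable (fun t : (EuclideanSpace ℝ (Fin d) × EuclideanSpace ℝ (Fin d)) ×
    EuclideanSpace ℝ (Fin d) => (t.1.2, t.2)) := by fun_prop
  have mo : Measurable (fun t : (EuclideanSpace ℝ (Fin d) × EuclideanSpace ℝ (Fin d)) ×
    EuclideanSpace ℝ (Fin d) => (t.1.1, t.2)) := by fun_prop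
  -- `hp'`, `hm'`: order and alignment of `(x, y)` and of `(y, z)`, pulled back to triples
  have hp' := ae_of_ae_map mf.aemeasurable hp
  have hm' := ae_of_ae_map ms.aemeasurable hm
  have mc : Measurable (fun p : EuclideanSpace ℝ (Fin d) × EuclideanSpace ℝ (Fin d) =>
    ENNReal.ofReal (‖p.1 - p.2‖ ^ 2)) := by fun_prop
  have hms := measurableSet_directed d
  have hms' : MeasurableSet {p : EuclideanSpace ℝ (Fin d) × EuclideanSpace ℝ (Fin d) |
      ∃ i, i ∉ I ∪ J ∧ p.1 i ≠ p.2 i} := by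
    simp only [Set.ofPred_exists, Set.ofPred_and]
    refine MeasurableSet.iUnion fun i => (MeasurableSet.const _).inter ?_
    exact (measurableSet_eq_fun (by fun_prop) (by fun_prop)).compl
  have hpr := Measure.isProbabilityMeasure_map (μ := π) mo.aemeasurable
  refine ⟨π.map (fun t => (t.1.1, t.2)), ⟨hpr, ?_, ?_, ?_⟩, ?_, ?_⟩
  · rw [← hp₁, Measure.map_map measurable_fst mo, Measure.map_map measurable_fst mf]
    rfl
  · rw [← hm₂, Measure.map_map measurable_snd mo, Measure.map_map measurable_snd ms]
    rfl
  · rw [← mem_ae_iff_prob_eq_one hms]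
    refine (ae_map_iff mo.aemeasurable hms).mpr ?_
    filter_upwards [hp', hm'] with t h₁ h₂ i
    exact (h₁.1 i).trans (h₂.1 i)
  · rw [IsAligned, Measure.map_apply mo hms', measure_eq_zero_iff_ae_notMem]
    filter_upwards [hp', hm'] with t h₁ h₂
    rintro ⟨i, hi, hne⟩
    rw [Finset.mem_union, not_or] at hi
    exact hne ((h₁.2 i hi.1).trans (h₂.2 i hi.2))
  · simp only [cost2sq]
    rw [lintegral_map mc mo, lintegral_map mc mf, lintegral_map mc ms]
    refine Eq.trans (lintegral_congr_ae ?_) (lintegral_add_left (mc.comp mf) _)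
    filter_upwards [hp', hm'] with t h₁ h₂
    rw [norm_sub_sq_of_disjoint hIJ h₁.2 h₂.2,
      ENNReal.ofReal_add (sq_nonneg _) (sq_nonneg _)]
    rfl
end

section
/- Let Ω ⊂ ℝ^d be a bounded Borel set and p ∈ [1,∞). Then the directed p-Wasserstein distance is a quasimetric on Borel probability measures on Ω: (i) W_p(μ → ν) ≥ 0 for all μ, ν, with W_p(μ → ν) = 0 if and only if μ = ν; and (ii) for all Borel probability measures μ, ϱ, ν on Ω, W_p(μ → ν) ≤ W_p(μ → ϱ) + W_p(ϱ → ν) (as an inequality in [0,∞]). -/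
/-!
The triangle inequality rests on gluing (`exists_gluing`): directed couplings of `μ, ϱ` and of
`ϱ, ν` are disintegrated over their common marginal `ϱ`, and the two conditional laws are made
independent given the middle point. The resulting law of a triple `(y, (x, z))` has
`x ⪯ y ⪯ z` almost surely, so `(x, z)` is a directed coupling of `μ, ν`, and Minkowski's
inequality in `L^p` bounds its cost by the sum of the two costs.

The cost vanishes on the diagonal coupling, which gives `W_p(μ → μ) = 0`. Conversely, by Markov's
inequality a coupling of small cost moves little mass far, so `W_p(μ → ν) = 0` makes the
Lévy–Prokhorov distance of `μ` and `ν` zero, whence `μ = ν`; no optimal coupling is needed.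
-/

open MeasureTheory
open scoped ENNReal

/-- The `p`-transport cost `C_p(γ) = (∫ |x-y|^p dγ)^{1/p}` in `[0,∞]`. -/
noncomputable def costP (d : ℕ) (p : ℝ)
    (γ : Measure (EuclideanSpace ℝ (Fin d) × EuclideanSpace ℝ (Fin d))) : ℝ≥0∞ :=
  (∫⁻ q, ENNReal.ofReal (‖q.1 - q.2‖ ^ p) ∂γ) ^ (1 / p)

/-- The directed `p`-Wasserstein distance `W_p(μ → ν)`, valued in `[0,∞]`
(the infimum of an empty set being `∞`). -/
noncomputable def WpDir (d : ℕ) (p : ℝ)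
    (μ ν : Measure (EuclideanSpace ℝ (Fin d))) : ℝ≥0∞ :=
  sInf {c | ∃ γ, IsDirCoupling d μ ν γ ∧ c = costP d p γ}

open ProbabilityTheory

theorem costP_eq (d : ℕ) {p : ℝ} (hp : 1 ≤ p)
    (γ : Measure (EuclideanSpace ℝ (Fin d) × EuclideanSpace ℝ (Fin d))) :
    costP d p γ = (∫⁻ q, ‖q.1 - q.2‖ₑ ^ p ∂γ) ^ (1 / p) := by
  unfold costP
  congr 2 with q
  rw [← ofReal_norm, ENNReal.ofReal_rpow_of_nonneg (norm_nonneg _) (by linarith)]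

theorem measurableSet_order (d : ℕ) :
    MeasurableSet {q : EuclideanSpace ℝ (Fin d) × EuclideanSpace ℝ (Fin d) |
      ∀ i, q.1 i ≤ q.2 i} := by
  rw [Set.ofPred_forall]
  exact MeasurableSet.iInter fun i => measurableSet_le (by fun_prop) (by fun_prop)

theorem IsDirCoupling.ae_le {d : ℕ} {μ ν : Measure (EuclideanSpace ℝ (Fin d))}
    {γ : Measure (EuclideanSpace ℝ (Fin d) × EuclideanSpace ℝ (Fin d))}
    (h : IsDirCoupling d μ ν γ) : ∀ᵐ q ∂γ, ∀ i, q.1 i ≤ q.2 i := by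
  have := h.1
  exact (mem_ae_iff_prob_eq_one (measurableSet_order d)).2 h.2.2.2

/-- Gluing lemma: two couplings sharing the marginal `ϱ` are the `(x, y)`- and `(y, z)`-marginals
of one law of triples `(y, (x, z))`. -/
theorem exists_gluing_s17 {E : Type*} [MeasurableSpace E] [StandardBorelSpace E] [Nonempty E]
    (γ₁ γ₂ : Measure (E × E)) [IsProbabilityMeasure γ₁] [IsProbabilityMeasure γ₂]
    (h : γ₁.map Prod.snd = γ₂.map Prod.fst) :
    ∃ τ : Measure (E × E × E), τ.map (fun t => (t.2.1, t.1)) = γ₁ ∧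
      τ.map (fun t => (t.1, t.2.2)) = γ₂ := by
  set γ₁' := γ₁.map Prod.swap with hγ₁'
  have : IsProbabilityMeasure γ₁' := Measure.isProbabilityMeasure_map (by fun_prop)
  have hfst : γ₁'.fst = γ₂.fst := by
    rw [Measure.fst, Measure.fst, hγ₁', Measure.map_map (by fun_prop) (by fun_prop), ← h]
    rfl
  refine ⟨γ₂.fst ⊗ₘ (γ₁'.condKernel ×ₖ γ₂.condKernel), ?_, ?_⟩
  · have h1 : (γ₂.fst ⊗ₘ (γ₁'.condKernel ×ₖ γ₂.condKernel)).map (Prod.map id Prod.fst) = γ₁' := by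
      rw [← Measure.compProd_map (by fun_prop), ← Kernel.fst_eq, Kernel.fst_prod, ← hfst,
        Measure.disintegrate]
    have h2 : γ₁'.map Prod.swap = γ₁ := by
      rw [hγ₁', Measure.map_map (by fun_prop) (by fun_prop)]
      simp
    refine Eq.trans ?_ ((congrArg (Measure.map Prod.swap) h1).trans h2)
    rw [Measure.map_map (by fun_prop) (by fun_prop)]
    rfl
  · have h1 : (γ₂.fst ⊗ₘ (γ₁'.condKernel ×ₖ γ₂.condKernel)).map (Prod.map id Prod.snd) = γ₂ := by
      rw [← Measure.compProd_map (by fun_prop), ← Kernel.snd_eq, Kernel.snd_prod,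
        Measure.disintegrate]
    exact h1

theorem exists_trans {d : ℕ} {p : ℝ} (hp : 1 ≤ p) {μ ϱ ν : Measure (EuclideanSpace ℝ (Fin d))}
    {γ₁ γ₂ : Measure (EuclideanSpace ℝ (Fin d) × EuclideanSpace ℝ (Fin d))}
    (h₁ : IsDirCoupling d μ ϱ γ₁) (h₂ : IsDirCoupling d ϱ ν γ₂) :
    ∃ γ, IsDirCoupling d μ ν γ ∧ costP d p γ ≤ costP d p γ₁ + costP d p γ₂ := by
  have := h₁.1
  have := h₂.1
  obtain ⟨τ, hτ₁, hτ₂⟩ := exists_gluing_s17 γ₁ γ₂ (h₁.2.2.1.trans h₂.2.1.symm)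
  have hτ : IsProbabilityMeasure τ := by
    refine ⟨?_⟩
    have := measure_univ (μ := γ₂)
    rwa [← hτ₂, Measure.map_apply (by fun_prop) MeasurableSet.univ] at this
  have hγ : IsProbabilityMeasure (τ.map Prod.snd) := Measure.isProbabilityMeasure_map (by fun_prop)
  refine ⟨τ.map Prod.snd, ⟨hγ, ?_, ?_, ?_⟩, ?_⟩
  · rw [← h₁.2.1, ← hτ₁, Measure.map_map (by fun_prop) (by fun_prop),
      Measure.map_map (by fun_prop) (by fun_prop)]
    rfl
  · rw [← h₂.2.2.1, ← hτ₂, Measure.map_map (by fun_prop) (by fun_prop),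
      Measure.map_map (by fun_prop) (by fun_prop)]
    rfl
  · rw [← mem_ae_iff_prob_eq_one (measurableSet_order d)]
    have a₁ := h₁.ae_le
    have a₂ := h₂.ae_le
    rw [← hτ₁] at a₁
    rw [← hτ₂] at a₂
    have b₁ := ae_of_ae_map (by fun_prop) a₁
    have b₂ := ae_of_ae_map (by fun_prop) a₂
    refine (ae_map_iff (by fun_prop) (measurableSet_order d)).2 ?_
    filter_upwards [b₁, b₂] with t ht₁ ht₂ i using (ht₁ i).trans (ht₂ i)
  · rw [costP_eq d hp, costP_eq d hp, costP_eq d hp, ← hτ₁, ← hτ₂,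
      lintegral_map (by fun_prop) (by fun_prop), lintegral_map (by fun_prop) (by fun_prop),
      lintegral_map (by fun_prop) (by fun_prop)]
    refine le_trans ?_ (ENNReal.lintegral_Lp_add_le (by fun_prop) (by fun_prop) hp)
    gcongr with t
    rw [Pi.add_apply, ← sub_add_sub_cancel t.2.1 t.1 t.2.2]
    exact enorm_add_le _ _

theorem WpDir_triangle (d : ℕ) {p : ℝ} (hp : 1 ≤ p)
    (μ ϱ ν : Measure (EuclideanSpace ℝ (Fin d))) :
    WpDir d p μ ν ≤ WpDir d p μ ϱ + WpDir d p ϱ ν := by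
  rw [WpDir, WpDir, WpDir, ENNReal.sInf_add]
  refine le_iInf₂ fun a ⟨γ₁, h₁, ha⟩ => ?_
  rw [ENNReal.add_sInf]
  refine le_iInf₂ fun b ⟨γ₂, h₂, hb⟩ => ?_
  obtain ⟨γ, h, hc⟩ := exists_trans hp h₁ h₂
  rw [ha, hb]
  exact sInf_le_of_le ⟨γ, h, rfl⟩ hc

theorem WpDir_self (d : ℕ) {p : ℝ} (hp : 1 ≤ p)
    (μ : Measure (EuclideanSpace ℝ (Fin d))) [IsProbabilityMeasure μ] : WpDir d p μ μ = 0 := by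
  have hp0 : 0 < p := by linarith
  have hm : Measurable fun x : EuclideanSpace ℝ (Fin d) => (x, x) := by fun_prop
  suffices h : ∃ γ, IsDirCoupling d μ μ γ ∧ 0 = costP d p γ from nonpos_iff_eq_zero.1 (sInf_le h)
  refine ⟨μ.map fun x => (x, x), ⟨?_, ?_, ?_, ?_⟩, ?_⟩
  · exact Measure.isProbabilityMeasure_map hm.aemeasurable
  · rw [Measure.map_map (by fun_prop) hm]
    exact Measure.map_id
  · rw [Measure.map_map (by fun_prop) hm]
    exact Measure.map_id
  · rw [Measure.map_apply hm (measurableSet_order d)]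
    simp
  · rw [costP_eq d hp, lintegral_map (by fun_prop) hm]
    simp [hp0]

/-- The one-sided Lévy–Prokhorov estimate: a coupling of small enough cost gives mass at most `ε` to
pairs at distance at least `ε`, and all other mass sitting in `B` ends in the `ε`-thickening. -/
theorem measure_le_thickening (d : ℕ) {p : ℝ} (hp : 1 ≤ p)
    {μ ν : Measure (EuclideanSpace ℝ (Fin d))} (h : WpDir d p μ ν = 0) {ε : ℝ≥0∞}
    (hε : 0 < ε) (hεt : ε < ∞) {B : Set (EuclideanSpace ℝ (Fin d))} (hB : MeasurableSet B) :
    μ B ≤ ν (Metric.thickening ε.toReal B) + ε := by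
  have hp0 : 0 < p := by linarith
  -- Below this cost threshold, Markov's inequality bounds the mass moved by at least `ε` by `ε`.
  have hη : WpDir d p μ ν < (ε ^ p * ε) ^ (1 / p) := by
    rw [h]
    exact ENNReal.rpow_pos (ENNReal.mul_pos (ENNReal.rpow_pos hε hεt.ne).ne' hε.ne')
      (ENNReal.mul_ne_top (ENNReal.rpow_ne_top_of_nonneg hp0.le hεt.ne) hεt.ne)
  obtain ⟨_, ⟨γ, hγ, rfl⟩, hlt⟩ := sInf_lt_iff.1 hη
  rw [costP_eq d hp, ENNReal.rpow_lt_rpow_iff (by positivity)] at hlt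
  have hfar : γ {q | ε ≤ ‖q.1 - q.2‖ₑ} ≤ ε := by
    have hM := (mul_meas_ge_le_lintegral (μ := γ)
      (f := fun q => ‖q.1 - q.2‖ₑ ^ p) (by fun_prop) (ε ^ p)).trans hlt.le
    simp only [ENNReal.rpow_le_rpow_iff hp0] at hM
    exact (ENNReal.mul_le_mul_iff_right (ENNReal.rpow_pos hε hεt.ne).ne'
      (ENNReal.rpow_ne_top_of_nonneg hp0.le hεt.ne)).1 hM
  have hsub : Prod.fst ⁻¹' B ⊆
      Prod.snd ⁻¹' (Metric.thickening ε.toReal B) ∪ {q | ε ≤ ‖q.1 - q.2‖ₑ} := by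
    intro q hq
    by_cases hd : ε ≤ ‖q.1 - q.2‖ₑ
    · exact Or.inr hd
    · refine Or.inl (Metric.mem_thickening_iff.2 ⟨q.1, hq, ?_⟩)
      rw [dist_comm, dist_eq_norm, ← toReal_enorm]
      exact ENNReal.toReal_strict_mono hεt.ne (not_le.1 hd)
  calc μ B = γ (Prod.fst ⁻¹' B) := by
        rw [← hγ.2.1, Measure.map_apply measurable_fst hB]
    _ ≤ γ (Prod.snd ⁻¹' (Metric.thickening ε.toReal B)) + γ {q | ε ≤ ‖q.1 - q.2‖ₑ} :=
        (measure_mono hsub).trans (measure_union_le _ _)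
    _ ≤ ν (Metric.thickening ε.toReal B) + ε := by
        rw [← hγ.2.2.1, Measure.map_apply measurable_snd Metric.isOpen_thickening.measurableSet]
        gcongr

theorem eq_of_WpDir_eq_zero (d : ℕ) {p : ℝ} (hp : 1 ≤ p)
    {μ ν : Measure (EuclideanSpace ℝ (Fin d))} [IsProbabilityMeasure μ] [IsProbabilityMeasure ν]
    (h : WpDir d p μ ν = 0) : μ = ν := by
  have hLP : levyProkhorovEDist μ ν = 0 :=
    le_antisymm (levyProkhorovEDist_le_of_forall_le μ ν 0 fun ε B hε hεt hB =>
      measure_le_thickening d hp h hε hεt hB) zero_le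
  refine ext_of_generate_finite _ ?_ isPiSystem_isClosed (fun A hA => ?_) (by simp)
  · rw [BorelSpace.measurable_eq (α := EuclideanSpace ℝ (Fin d)), borel_eq_generateFrom_isClosed]
  · exact measure_eq_measure_of_levyProkhorovEDist_eq_zero_of_isClosed hLP hA
      ⟨1, one_pos, measure_ne_top _ _⟩ ⟨1, one_pos, measure_ne_top _ _⟩

/-- The directed `p`-Wasserstein distance is a quasimetric on probability measures on a
bounded Borel set `Ω`: it is nonnegative, vanishes exactly on the diagonal, and satisfies
the triangle inequality. -/
theorem directed_wasserstein_quasimetric (d : ℕ) (Ω : Set (EuclideanSpace ℝ (Fin d)))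
    (hΩm : MeasurableSet Ω) (hΩb : Bornology.IsBounded Ω)
    (p : ℝ) (hp : 1 ≤ p)
    (μ ϱ ν : Measure (EuclideanSpace ℝ (Fin d)))
    [IsProbabilityMeasure μ] [IsProbabilityMeasure ϱ] [IsProbabilityMeasure ν]
    (hμ : μ Ωᶜ = 0) (hϱ : ϱ Ωᶜ = 0) (hν : ν Ωᶜ = 0) :
    0 ≤ WpDir d p μ ν ∧ (WpDir d p μ ν = 0 ↔ μ = ν) ∧
      WpDir d p μ ν ≤ WpDir d p μ ϱ + WpDir d p ϱ ν := by
  refine ⟨zero_le, ⟨eq_of_WpDir_eq_zero d hp, ?_⟩, WpDir_triangle d hp μ ϱ ν⟩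
  rintro rfl
  exact WpDir_self d hp μ
end

section
/- Let p ∈ (1,∞), and let μ and ν be Borel probability measures on [0,1] that are absolutely continuous with respect to Lebesgue measure with strictly positive densities. Suppose μ dominates ν, i.e. μ([0,x)) ≥ ν([0,x)) for every x ∈ [0,1]. Then W_p(μ → ν) = W_p(μ, ν); in particular, there is a directed coupling of μ and ν whose cost equals the unrestricted optimal transport cost. -/
/-!
Both distances are attained by the monotone (quantile) coupling, the law of
`(F⁻¹(U), G⁻¹(U))` with `U` uniform on `(0,1)` and `F`, `G` the distribution functions of `μ`, `ν`.

It is directed because domination says `F ≥ G`, hence `F⁻¹ ≤ G⁻¹`.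

For optimality, writing `r ^ p` as a double integral of its second derivative gives, for `x ≤ y`,
`(y - x) ^ p = M {(s, t) | x ≤ s ∧ t < y}`, where `M` is the measure with density
`p (p - 1) (t - s) ^ (p - 2)` on `{s < t}` (`rpowMeasure_quadrant`); for `y < x` the right-hand side
vanishes. By Tonelli, the cost of a coupling `γ` is at least
`∫ γ {(x, y) | x ≤ s ∧ t < y} dM(s, t)`, with equality if `γ` is directed. Every coupling satisfies
`γ {x ≤ s ∧ t < y} ≥ μ (-∞, s] - ν (-∞, t]`, and the quantile coupling attains the positive part of
this bound for all `(s, t)` simultaneously (`quantileCoupling_quadrant_le`), so it minimises the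
integrand pointwise.
-/

open MeasureTheory
open scoped ENNReal

/-- `γ` is a coupling of the measures `μ` and `ν` on `ℝ`. -/
def IsCoupling1D (μ ν : Measure ℝ) (γ : Measure (ℝ × ℝ)) : Prop :=
  IsProbabilityMeasure γ ∧ γ.map Prod.fst = μ ∧ γ.map Prod.snd = ν

/-- `γ` is a directed coupling: a coupling giving full mass to `{(x,y) : x ≤ y}`. -/
def IsDirCoupling1D (μ ν : Measure ℝ) (γ : Measure (ℝ × ℝ)) : Prop :=
  IsCoupling1D μ ν γ ∧ γ {q : ℝ × ℝ | q.1 ≤ q.2} = 1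

/-- The `p`-transport cost `C_p(γ) = (∫ |x-y|^p dγ)^{1/p}` in `[0,∞]`. -/
noncomputable def costP1D (p : ℝ) (γ : Measure (ℝ × ℝ)) : ℝ≥0∞ :=
  (∫⁻ q, ENNReal.ofReal (|q.1 - q.2| ^ p) ∂γ) ^ (1 / p)

/-- The `p`-Wasserstein distance `W_p(μ, ν)` over all couplings. -/
noncomputable def Wp1D (p : ℝ) (μ ν : Measure ℝ) : ℝ≥0∞ :=
  sInf {c | ∃ γ, IsCoupling1D μ ν γ ∧ c = costP1D p γ}

/-- The directed `p`-Wasserstein distance `W_p(μ → ν)` over directed couplings. -/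
noncomputable def WpDir1D (p : ℝ) (μ ν : Measure ℝ) : ℝ≥0∞ :=
  sInf {c | ∃ γ, IsDirCoupling1D μ ν γ ∧ c = costP1D p γ}

open ProbabilityTheory Set Filter Topology

/-! ### Quantile functions -/

/-- The quantile function (generalised inverse of the distribution function) of `μ`. Only its values
on `(0,1)` are meaningful: elsewhere the infimum may be over an empty or unbounded set. -/
noncomputable def quantileFn (μ : Measure ℝ) (u : ℝ) : ℝ := sInf {x | u ≤ cdf μ x}

lemma quantileFn_le_iff (μ : Measure ℝ) {u : ℝ} (hu : u ∈ Ioo (0:ℝ) 1) (x : ℝ) :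
    quantileFn μ u ≤ x ↔ u ≤ cdf μ x := by
  have hne : {x | u ≤ cdf μ x}.Nonempty := by
    obtain ⟨x, hx⟩ := ((tendsto_cdf_atTop μ).eventually (eventually_gt_nhds hu.2)).exists
    exact ⟨x, hx.le⟩
  have hbdd : BddBelow {x | u ≤ cdf μ x} := by
    obtain ⟨a, ha⟩ := ((tendsto_cdf_atBot μ).eventually (eventually_lt_nhds hu.1)).exists
    refine ⟨a, fun y hy => ?_⟩
    by_contra! h
    exact absurd (hy.trans (monotone_cdf μ h.le)) (not_le.2 ha)
  refine ⟨fun h => ?_, fun h => csInf_le hbdd h⟩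
  -- Every point to the right of `x` lies in the defining set; conclude by right-continuity.
  have hc : Tendsto (cdf μ) (𝓝[>] x) (𝓝 (cdf μ x)) :=
    ((cdf μ).right_continuous x).mono_left (nhdsWithin_mono _ Ioi_subset_Ici_self)
  refine ge_of_tendsto hc ?_
  filter_upwards [self_mem_nhdsWithin] with y hy
  obtain ⟨z, hz, hzy⟩ := exists_lt_of_csInf_lt hne (lt_of_le_of_lt h hy)
  exact le_trans hz (monotone_cdf μ hzy.le)

lemma aemeasurable_quantileFn (μ : Measure ℝ) :
    AEMeasurable (quantileFn μ) (volume.restrict (Ioo (0:ℝ) 1)) := by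
  refine aemeasurable_restrict_of_monotoneOn measurableSet_Ioo fun u hu v hv huv => ?_
  rw [quantileFn_le_iff μ hu]
  exact huv.trans ((quantileFn_le_iff μ hv _).1 le_rfl)

lemma map_quantileFn (μ : Measure ℝ) [IsProbabilityMeasure μ] :
    (volume.restrict (Ioo (0:ℝ) 1)).map (quantileFn μ) = μ := by
  have : IsFiniteMeasure ((volume.restrict (Ioo (0:ℝ) 1)).map (quantileFn μ)) :=
    Measure.isFiniteMeasure_map _ _
  refine Measure.ext_of_Iic _ _ fun a => ?_
  rw [Measure.map_apply_of_aemeasurable (aemeasurable_quantileFn μ) measurableSet_Iic,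
    Measure.restrict_apply' measurableSet_Ioo, ← ofReal_cdf μ a]
  have h1 : quantileFn μ ⁻¹' Iic a ∩ Ioo (0:ℝ) 1 = Ioc 0 (cdf μ a) ∩ Ioo 0 1 := by
    ext u
    simp only [mem_inter_iff, mem_preimage, mem_Iic, mem_Ioc]
    constructor
    · rintro ⟨h, hu⟩
      exact ⟨⟨hu.1, (quantileFn_le_iff μ hu a).1 h⟩, hu⟩
    · rintro ⟨h, hu⟩
      exact ⟨(quantileFn_le_iff μ hu a).2 h.2, hu⟩
  rw [h1]
  refine le_antisymm ?_ ?_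
  · refine (measure_mono inter_subset_left).trans ?_
    simp
  · have : Ioo 0 (cdf μ a) ⊆ Ioc 0 (cdf μ a) ∩ Ioo 0 1 := fun u hu =>
      ⟨⟨hu.1, hu.2.le⟩, hu.1, hu.2.trans_le (cdf_le_one μ a)⟩
    refine le_trans ?_ (measure_mono this)
    simp

/-! ### The quantile coupling -/

/-- The monotone coupling of `μ` and `ν`: both quantile functions evaluated at a common uniform
variable. -/
noncomputable def quantileCoupling (μ ν : Measure ℝ) : Measure (ℝ × ℝ) :=
  (volume.restrict (Ioo (0:ℝ) 1)).map fun u => (quantileFn μ u, quantileFn ν u)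

lemma aemeasurable_quantilePair (μ ν : Measure ℝ) :
    AEMeasurable (fun u => (quantileFn μ u, quantileFn ν u)) (volume.restrict (Ioo (0:ℝ) 1)) :=
  (aemeasurable_quantileFn μ).prodMk (aemeasurable_quantileFn ν)

lemma isCoupling1D_quantileCoupling (μ ν : Measure ℝ) [IsProbabilityMeasure μ]
    [IsProbabilityMeasure ν] : IsCoupling1D μ ν (quantileCoupling μ ν) := by
  have hm := aemeasurable_quantilePair μ ν
  refine ⟨?_, ?_, ?_⟩
  · have : IsProbabilityMeasure (volume.restrict (Ioo (0:ℝ) 1)) := ⟨by simp⟩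
    exact Measure.isProbabilityMeasure_map hm
  · rw [quantileCoupling, AEMeasurable.map_map_of_aemeasurable measurable_fst.aemeasurable hm]
    exact map_quantileFn μ
  · rw [quantileCoupling, AEMeasurable.map_map_of_aemeasurable measurable_snd.aemeasurable hm]
    exact map_quantileFn ν

lemma isDirCoupling1D_quantileCoupling (μ ν : Measure ℝ) [IsProbabilityMeasure μ]
    [IsProbabilityMeasure ν] (h : ∀ x, cdf ν x ≤ cdf μ x) :
    IsDirCoupling1D μ ν (quantileCoupling μ ν) := by
  refine ⟨isCoupling1D_quantileCoupling μ ν, ?_⟩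
  rw [quantileCoupling, Measure.map_apply_of_aemeasurable (aemeasurable_quantilePair μ ν)
    (measurableSet_le measurable_fst measurable_snd), Measure.restrict_apply' measurableSet_Ioo]
  have : (fun u => (quantileFn μ u, quantileFn ν u)) ⁻¹' {q : ℝ × ℝ | q.1 ≤ q.2} ∩ Ioo (0:ℝ) 1
      = Ioo 0 1 := by
    refine inter_eq_right.2 fun u hu => ?_
    exact (quantileFn_le_iff μ hu _).2 (((quantileFn_le_iff ν hu _).1 le_rfl).trans (h _))
  rw [this]
  simp

lemma quantileCoupling_quadrant (μ ν : Measure ℝ) [IsProbabilityMeasure μ]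
    [IsProbabilityMeasure ν] (s t : ℝ) :
    quantileCoupling μ ν {q | q.1 ≤ s ∧ t < q.2} ≤ μ (Iic s) - ν (Iic t) := by
  have hA : MeasurableSet {q : ℝ × ℝ | q.1 ≤ s ∧ t < q.2} :=
    (measurableSet_le measurable_fst measurable_const).inter
      (measurableSet_lt measurable_const measurable_snd)
  rw [quantileCoupling, Measure.map_apply_of_aemeasurable (aemeasurable_quantilePair μ ν) hA,
    Measure.restrict_apply' measurableSet_Ioo]
  have hsub : (fun u => (quantileFn μ u, quantileFn ν u)) ⁻¹' {q : ℝ × ℝ | q.1 ≤ s ∧ t < q.2}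
      ∩ Ioo (0:ℝ) 1 ⊆ Ioc (cdf ν t) (cdf μ s) := by
    rintro u ⟨⟨h1, h2⟩, hu⟩
    refine ⟨?_, (quantileFn_le_iff μ hu s).1 h1⟩
    by_contra! h
    exact absurd ((quantileFn_le_iff ν hu t).2 h) (not_le.2 h2)
  refine (measure_mono hsub).trans ?_
  rw [Real.volume_Ioc, ENNReal.ofReal_sub _ (cdf_nonneg ν t), ofReal_cdf, ofReal_cdf]

/-- The quantile coupling gives the least possible mass to every upper-left quadrant. -/
lemma quantileCoupling_quadrant_le (μ ν : Measure ℝ) [IsProbabilityMeasure μ]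
    [IsProbabilityMeasure ν] {γ : Measure (ℝ × ℝ)} (hγ : IsCoupling1D μ ν γ) (s t : ℝ) :
    quantileCoupling μ ν {q | q.1 ≤ s ∧ t < q.2} ≤ γ {q | q.1 ≤ s ∧ t < q.2} := by
  refine (quantileCoupling_quadrant μ ν s t).trans ?_
  obtain ⟨-, h1, h2⟩ := hγ
  rw [tsub_le_iff_right, ← h1, ← h2, Measure.map_apply measurable_fst measurableSet_Iic,
    Measure.map_apply measurable_snd measurableSet_Iic]
  refine le_trans (measure_mono fun q hq => ?_) (measure_union_le _ _)
  rcases le_or_gt q.2 t with h | h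
  · exact Or.inr h
  · exact Or.inl ⟨hq, h⟩

/-! ### Integral representation of the cost -/

lemma lintegral_rpow_Ioc {q a : ℝ} (hq : 0 < q) (ha : 0 ≤ a) :
    ∫⁻ r in Ioc 0 a, ENNReal.ofReal (q * r ^ (q - 1)) = ENNReal.ofReal (a ^ q) := by
  have hi : IntervalIntegrable (fun r : ℝ => q * r ^ (q - 1)) volume 0 a :=
    (intervalIntegral.intervalIntegrable_rpow' (by linarith)).const_mul q
  rw [← ofReal_integral_eq_lintegral_ofReal ((intervalIntegrable_iff_integrableOn_Ioc_of_le ha).1 hi),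
    ← intervalIntegral.integral_of_le ha, intervalIntegral.integral_const_mul,
    integral_rpow (Or.inl (by linarith))]
  · congr 1
    simp [Real.zero_rpow hq.ne']
    field_simp
  · filter_upwards [ae_restrict_mem measurableSet_Ioc] with r hr
    have := Real.rpow_nonneg hr.1.le (q - 1)
    positivity

lemma lintegral_rpow_Ioo {q a b : ℝ} (hq : 0 < q) (hab : a ≤ b) :
    ∫⁻ t in Ioo a b, ENNReal.ofReal (q * (t - a) ^ (q - 1)) = ENNReal.ofReal ((b - a) ^ q) := by
  rw [← lintegral_rpow_Ioc hq (sub_nonneg.2 hab), Measure.restrict_congr_set Ioo_ae_eq_Ioc,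
    ← lintegral_indicator measurableSet_Ioc, ← lintegral_indicator measurableSet_Ioc,
    ← lintegral_sub_right_eq_self ((Ioc 0 (b - a)).indicator _) a]
  refine lintegral_congr fun t => ?_
  simp [indicator, sub_pos]

lemma lintegral_rpow_Ico {q a b : ℝ} (hq : 0 < q) (hab : a ≤ b) :
    ∫⁻ s in Ico a b, ENNReal.ofReal (q * (b - s) ^ (q - 1)) = ENNReal.ofReal ((b - a) ^ q) := by
  rw [← lintegral_rpow_Ioc hq (sub_nonneg.2 hab),
    ← lintegral_indicator measurableSet_Ico, ← lintegral_indicator measurableSet_Ioc,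
    ← lintegral_sub_left_eq_self _ b]
  refine lintegral_congr fun s => ?_
  simp [indicator, and_comm, le_sub_comm]

/-- The density `p (p - 1) (t - s) ^ (p - 2)` on `{s < t}`. -/
noncomputable def rpowWeight (p : ℝ) (z : ℝ × ℝ) : ℝ≥0∞ :=
  {z : ℝ × ℝ | z.1 < z.2}.indicator
    (fun z => ENNReal.ofReal (p * ((p - 1) * (z.2 - z.1) ^ (p - 1 - 1)))) z

/-- The measure representing the cost: `(y - x) ^ p` is its mass of `[x, ∞) × (-∞, y)`, for
`x ≤ y`. -/
noncomputable def rpowMeasure (p : ℝ) : Measure (ℝ × ℝ) :=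
  (volume.prod volume).withDensity (rpowWeight p)

instance (p : ℝ) : SFinite (rpowMeasure p) := by unfold rpowMeasure; infer_instance

lemma measurable_rpowWeight (p : ℝ) : Measurable (rpowWeight p) := by
  refine Measurable.indicator ?_ (measurableSet_lt measurable_fst measurable_snd)
  fun_prop

lemma measurableSet_quadrant (x y : ℝ) : MeasurableSet {z : ℝ × ℝ | x ≤ z.1 ∧ z.2 < y} :=
  (measurableSet_le measurable_const measurable_fst).inter
    (measurableSet_lt measurable_snd measurable_const)

lemma rpowMeasure_quadrant {p : ℝ} (hp : 1 < p) {x y : ℝ} (hxy : x ≤ y) :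
    rpowMeasure p {z | x ≤ z.1 ∧ z.2 < y} = ENNReal.ofReal ((y - x) ^ p) := by
  rw [rpowMeasure, withDensity_apply _ (measurableSet_quadrant x y),
    ← lintegral_indicator (measurableSet_quadrant x y),
    lintegral_prod_symm' _ ((measurable_rpowWeight p).indicator (measurableSet_quadrant x y)),
    ← lintegral_rpow_Ioo (by linarith : 0 < p) hxy, ← lintegral_indicator measurableSet_Ioo]
  refine lintegral_congr fun t => ?_
  by_cases ht : t ∈ Ioo x y
  · rw [indicator_of_mem ht, ENNReal.ofReal_mul (by linarith),
      ← lintegral_rpow_Ico (by linarith : 0 < p - 1) ht.1.le,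
      ← lintegral_const_mul _ (by fun_prop), ← lintegral_indicator measurableSet_Ico]
    refine lintegral_congr fun s => ?_
    simp only [indicator, rpowWeight, mem_ofPred_eq, mem_Ico, ht.2, and_true]
    rw [← ENNReal.ofReal_mul (by linarith)]
    split_ifs <;> first | rfl | (exfalso; tauto)
  · rw [indicator_of_notMem ht]
    refine lintegral_eq_zero_of_ae_eq_zero (Eventually.of_forall fun s => ?_)
    simp only [indicator, rpowWeight, mem_ofPred_eq, Pi.zero_apply]
    split_ifs with h1 h2
    · exact absurd ⟨h1.1.trans_lt h2, h1.2⟩ ht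
    all_goals rfl

lemma rpowMeasure_quadrant_of_lt (p : ℝ) {x y : ℝ} (hxy : y < x) :
    rpowMeasure p {z | x ≤ z.1 ∧ z.2 < y} = 0 := by
  rw [rpowMeasure, withDensity_apply _ (measurableSet_quadrant x y)]
  refine (setLIntegral_congr_fun (measurableSet_quadrant x y) fun z hz => ?_).trans lintegral_zero
  have hz' : z ∉ {z : ℝ × ℝ | z.1 < z.2} := not_lt.2 (hz.2.le.trans (hxy.le.trans hz.1))
  exact indicator_of_notMem hz' _

/-- Tonelli's theorem for the incidence relation `x ≤ s ∧ t < y`. -/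
lemma lintegral_rpowMeasure_quadrant (p : ℝ) (γ : Measure (ℝ × ℝ)) [SFinite γ] :
    ∫⁻ q, rpowMeasure p {z | q.1 ≤ z.1 ∧ z.2 < q.2} ∂γ
      = ∫⁻ z, γ {q | q.1 ≤ z.1 ∧ z.2 < q.2} ∂rpowMeasure p := by
  have hA : MeasurableSet {w : (ℝ × ℝ) × (ℝ × ℝ) | w.1.1 ≤ w.2.1 ∧ w.2.2 < w.1.2} := by
    have h1 : MeasurableSet {w : (ℝ × ℝ) × (ℝ × ℝ) | w.1.1 ≤ w.2.1} :=
      measurableSet_le (by fun_prop) (by fun_prop)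
    have h2 : MeasurableSet {w : (ℝ × ℝ) × (ℝ × ℝ) | w.2.2 < w.1.2} :=
      measurableSet_lt (by fun_prop) (by fun_prop)
    exact h1.inter h2
  exact (Measure.prod_apply hA).symm.trans (Measure.prod_apply_symm hA)

lemma lintegral_cost_ge {p : ℝ} (hp : 1 < p) (γ : Measure (ℝ × ℝ)) :
    ∫⁻ q, rpowMeasure p {z | q.1 ≤ z.1 ∧ z.2 < q.2} ∂γ
      ≤ ∫⁻ q, ENNReal.ofReal (|q.1 - q.2| ^ p) ∂γ := by
  refine lintegral_mono fun q => ?_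
  rcases le_or_gt q.1 q.2 with h | h
  · dsimp only
    rw [rpowMeasure_quadrant hp h, abs_sub_comm, abs_of_nonneg (sub_nonneg.2 h)]
  · dsimp only
    rw [rpowMeasure_quadrant_of_lt p h]
    exact zero_le

lemma lintegral_cost_eq {p : ℝ} (hp : 1 < p) {γ : Measure (ℝ × ℝ)} [IsProbabilityMeasure γ]
    (h : γ {q : ℝ × ℝ | q.1 ≤ q.2} = 1) :
    ∫⁻ q, ENNReal.ofReal (|q.1 - q.2| ^ p) ∂γ
      = ∫⁻ q, rpowMeasure p {z | q.1 ≤ z.1 ∧ z.2 < q.2} ∂γ := by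
  have hae : ∀ᵐ q ∂γ, q.1 ≤ q.2 :=
    (mem_ae_iff_prob_eq_one (measurableSet_le measurable_fst measurable_snd)).2 h
  refine lintegral_congr_ae ?_
  filter_upwards [hae] with q hq
  rw [rpowMeasure_quadrant hp hq, abs_sub_comm, abs_of_nonneg (sub_nonneg.2 hq)]

/-! ### Optimality -/

lemma costP1D_quantileCoupling_le {p : ℝ} (hp : 1 < p) (μ ν : Measure ℝ) [IsProbabilityMeasure μ]
    [IsProbabilityMeasure ν] (h : ∀ x, cdf ν x ≤ cdf μ x) {γ : Measure (ℝ × ℝ)}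
    (hγ : IsCoupling1D μ ν γ) : costP1D p (quantileCoupling μ ν) ≤ costP1D p γ := by
  have hd := isDirCoupling1D_quantileCoupling μ ν h
  have := hd.1.1
  have := hγ.1
  refine ENNReal.rpow_le_rpow ?_ (by positivity)
  rw [lintegral_cost_eq hp hd.2]
  refine le_trans ?_ (lintegral_cost_ge hp γ)
  rw [lintegral_rpowMeasure_quadrant, lintegral_rpowMeasure_quadrant]
  exact lintegral_mono fun z => quantileCoupling_quadrant_le μ ν hγ z.1 z.2

/-- A measure with a density on `[0,1]` gives `(-∞, x]` the same mass as `[0, min x 1)`. -/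
lemma measure_Iic_eq_Ico {μ : Measure ℝ} {f : ℝ → ℝ≥0∞}
    (hμ : μ = (volume.restrict (Icc (0:ℝ) 1)).withDensity f) (x : ℝ) :
    μ (Iic x) = μ (Ico 0 (min x 1)) := by
  have hac : μ ≪ volume.restrict (Icc (0:ℝ) 1) := hμ ▸ withDensity_absolutelyContinuous _ _
  refine measure_congr ?_
  have h1 : ∀ᵐ y ∂μ, y ∈ Icc (0:ℝ) 1 := hac.ae_le (ae_restrict_mem measurableSet_Icc)
  have hne (c : ℝ) : ∀ᵐ y ∂μ, y ≠ c :=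
    (hac.trans Measure.restrict_le_self.absolutelyContinuous).ae_le (Measure.ae_ne volume c)
  filter_upwards [h1, hne x, hne 1] with y hy hx h1
  refine propext ?_
  change y ≤ x ↔ 0 ≤ y ∧ y < min x 1
  rw [lt_min_iff]
  exact ⟨fun h => ⟨hy.1, lt_of_le_of_ne h hx, lt_of_le_of_ne hy.2 h1⟩, fun h => h.2.1.le⟩

/-- For `p ∈ (1,∞)` and absolutely continuous probability measures `μ, ν` on `[0,1]` with
strictly positive densities such that `μ` dominates `ν` (`μ([0,x)) ≥ ν([0,x))` for all
`x ∈ [0,1]`), the directed and unrestricted `p`-Wasserstein distances agree; in particular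
some directed coupling achieves the unrestricted optimal transport cost. -/
theorem directed_wasserstein_of_domination (p : ℝ) (hp : 1 < p)
    (μ ν : Measure ℝ) [IsProbabilityMeasure μ] [IsProbabilityMeasure ν]
    (fμ fν : ℝ → ℝ) (hfμm : Measurable fμ) (hfνm : Measurable fν)
    (hfμpos : ∀ x ∈ Set.Icc (0:ℝ) 1, 0 < fμ x)
    (hfνpos : ∀ x ∈ Set.Icc (0:ℝ) 1, 0 < fν x)
    (hμd : μ = (volume.restrict (Set.Icc (0:ℝ) 1)).withDensity
      (fun x => ENNReal.ofReal (fμ x)))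
    (hνd : ν = (volume.restrict (Set.Icc (0:ℝ) 1)).withDensity
      (fun x => ENNReal.ofReal (fν x)))
    (hdom : ∀ x ∈ Set.Icc (0:ℝ) 1, ν (Set.Ico 0 x) ≤ μ (Set.Ico 0 x)) :
    WpDir1D p μ ν = Wp1D p μ ν ∧
      ∃ γ, IsDirCoupling1D μ ν γ ∧ costP1D p γ = Wp1D p μ ν := by
  have hcdf : ∀ x, cdf ν x ≤ cdf μ x := by
    intro x
    rw [← ENNReal.ofReal_le_ofReal_iff (cdf_nonneg μ x), ofReal_cdf, ofReal_cdf,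
      measure_Iic_eq_Ico hμd, measure_Iic_eq_Ico hνd]
    rcases lt_or_ge x 0 with h | h
    · rw [Ico_eq_empty (not_lt.2 ((min_le_left x 1).trans h.le))]
      simp
    · exact hdom _ ⟨le_min h zero_le_one, min_le_right _ _⟩
  have hd := isDirCoupling1D_quantileCoupling μ ν hcdf
  have hW : costP1D p (quantileCoupling μ ν) = Wp1D p μ ν := by
    refine le_antisymm (le_sInf ?_) (sInf_le ⟨_, hd.1, rfl⟩)
    rintro c ⟨γ, hγ, rfl⟩
    exact costP1D_quantileCoupling_le hp μ ν hcdf hγ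
  refine ⟨le_antisymm ?_ ?_, _, hd, hW⟩
  · rw [← hW]
    exact sInf_le ⟨_, hd, rfl⟩
  · exact sInf_le_sInf fun c ⟨γ, hγ, hc⟩ => ⟨γ, hγ.1, hc⟩
end
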